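/- Let s>7/2 be an integer and α a multi-index with 1≤|α|≤s, and let μ>0, λ∈ℝ with 2μ+3λ>0. Suppose ρ⁰∈H^{s+1}(𝕋³) with ‖ρ⁰‖_{H^{s+1}}≤K and ρ⁰≥ρ̂>0; let N∈H^s(𝕋³) with N+ρ⁰≥ρ̂/2 on 𝕋³, U∈H^s(𝕋³;ℝ³) and Θ∈H^{s+1}(𝕋³). Then for every η>0 there is a constant C_η=C(η,s,K,ρ̂,μ,λ) such that ⟨∂^α_x{(1/(N+ρ⁰))(2μ|D(U)|²+λ(div U)²)}, ∂^α_xΘ⟩_{L²(𝕋³)} ≤ η‖∇∂^α_xΘ‖²_{L²} + C_η(‖(N,U)‖⁴_{H^s} + ‖(N,U)‖^{2(s+1)}_{H^s}). -/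

import Mathlib

open MeasureTheory Real
open scoped ENNReal

noncomputable section

/-! ### Basic setup: periodic fields on the torus `𝕋³ = (ℝ/2πℤ)³`

Functions on the torus are modelled as `2π`-periodic functions on `ℝ³`,
with all integrals (`L²` and `H^s` norms, inner products) taken over the
fundamental cube `Q3 = [0,2π]³`. -/

/-- A point of space `ℝ³`. -/
abbrev Pt : Type := Fin 3 → ℝ

/-- Scalar fields. -/
abbrev SF : Type := Pt → ℝ

/-- Vector fields, componentwise. -/
abbrev VF : Type := Fin 3 → SF

/-- The fundamental cube `[0,2π]³` of the torus. -/
def Q3 : Set Pt := Set.univ.pi fun _ => Set.Icc 0 (2 * π)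

/-- `2π`-periodicity in each coordinate: such a function descends to `𝕋³`. -/
def PerS (f : SF) : Prop := ∀ (x : Pt) (i : Fin 3), f (x + Pi.single i (2 * π)) = f x

/-- Componentwise periodicity of a vector field. -/
def PerV (v : VF) : Prop := ∀ i, PerS (v i)

/-- SmoothS scalar field (proxy for membership in the Sobolev spaces `H^k(𝕋³)`,
together with periodicity). -/
abbrev SmoothS (f : SF) : Prop := ContDiff ℝ (⊤ : ℕ∞) f

/-- SmoothS vector field. -/
abbrev SmoothV (v : VF) : Prop := ∀ i, ContDiff ℝ (⊤ : ℕ∞) (v i)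

/-- Partial derivative `∂_i`. -/
def pd (i : Fin 3) (f : SF) : SF := fun x => fderiv ℝ f x (Pi.single i 1)

/-- Iterated partial derivative in a fixed direction. -/
def pdIter (i : Fin 3) : ℕ → SF → SF
  | 0, f => f
  | n + 1, f => pd i (pdIter i n f)

/-- The spatial derivative `∂^α_x` for a multi-index `α`. -/
def mderiv (α : Fin 3 → ℕ) (f : SF) : SF :=
  pdIter 0 (α 0) (pdIter 1 (α 1) (pdIter 2 (α 2) f))

/-- `∂^α_x` of a vector field, componentwise. -/
def mderivV (α : Fin 3 → ℕ) (v : VF) : VF := fun i => mderiv α (v i)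

/-- `L²(𝕋³)` norm of a scalar field. -/
def L2 (f : SF) : ℝ := (∫ x in Q3, (f x) ^ 2) ^ (1/2 : ℝ)

/-- `L²(𝕋³)` norm of a vector field. -/
def L2V (v : VF) : ℝ := (∫ x in Q3, ∑ i, (v i x) ^ 2) ^ (1/2 : ℝ)

/-- `L²(𝕋³)` inner product of scalar fields. -/
def ip (f g : SF) : ℝ := ∫ x in Q3, f x * g x

/-- `L²(𝕋³)` inner product of vector fields. -/
def ipV (v w : VF) : ℝ := ∫ x in Q3, ∑ i, v i x * w i x

/-- The finite set of multi-indices `α` with `|α| ≤ s`. -/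
def midx (s : ℕ) : Finset (Fin 3 → ℕ) :=
  (Fintype.piFinset fun _ => Finset.range (s + 1)).filter fun α => (∑ i, α i) ≤ s

/-- `H^s(𝕋³)` norm of a scalar field. -/
def HsNorm (s : ℕ) (f : SF) : ℝ := (∑ α ∈ midx s, (L2 (mderiv α f)) ^ 2) ^ (1/2 : ℝ)

/-- `H^s(𝕋³)` norm of a vector field. -/
def HsNormV (s : ℕ) (v : VF) : ℝ := (∑ i, (HsNorm s (v i)) ^ 2) ^ (1/2 : ℝ)

/-! ### Differential operators -/

/-- Gradient of a scalar field. -/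
def grad (f : SF) : VF := fun i => pd i f

/-- Divergence of a vector field. -/
def divv (v : VF) : SF := fun x => ∑ i, pd i (v i) x

/-- Laplacian of a scalar field. -/
def lap (f : SF) : SF := fun x => ∑ i, pd i (pd i f) x

/-- Curl of a vector field. -/
def curl (v : VF) : VF :=
  ![fun x => pd 1 (v 2) x - pd 2 (v 1) x,
    fun x => pd 2 (v 0) x - pd 0 (v 2) x,
    fun x => pd 0 (v 1) x - pd 1 (v 0) x]

/-- Cross product of vector fields. -/
def cross (a b : VF) : VF :=
  ![fun x => a 1 x * b 2 x - a 2 x * b 1 x,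
    fun x => a 2 x * b 0 x - a 0 x * b 2 x,
    fun x => a 0 x * b 1 x - a 1 x * b 0 x]

/-- Pointwise dot product of vector fields. -/
def vdot (a b : VF) : SF := fun x => ∑ i, a i x * b i x

/-- Pointwise squared Euclidean norm `|a|²` of a vector field. -/
def normSq (a : VF) : SF := fun x => ∑ i, (a i x) ^ 2

/-- Convective derivative `(u·∇)f`. -/
def conv (u : VF) (f : SF) : SF := fun x => ∑ i, u i x * pd i f x

/-- Convective derivative `(u·∇)v` of a vector field, componentwise. -/
def convV (u v : VF) : VF := fun j => conv u (v j)

/-- Symmetric gradient `D(u) = (∇u + ∇uᵀ)/2`, entrywise. -/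
def Dsym (u : VF) (i j : Fin 3) : SF := fun x => (pd j (u i) x + pd i (u j) x) / 2

/-- Squared Frobenius norm `|D(u)|²`. -/
def DabsSq (u : VF) : SF := fun x => ∑ i, ∑ j, (Dsym u i j x) ^ 2

/-- Squared Frobenius norm `|∇v|²` of the Jacobian of a vector field. -/
def gradSq (v : VF) : SF := fun x => ∑ i, ∑ j, (pd j (v i) x) ^ 2

/-- Squared Euclidean norm `|∇f|²` of the gradient of a scalar field. -/
def gradSqS (f : SF) : SF := fun x => ∑ i, (pd i f x) ^ 2

/-- Viscous stress tensor `Ψ(u) = 2μ D(u) + λ (div u) I₃`, entrywise. -/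
def Psi (μ lam : ℝ) (u : VF) (i j : Fin 3) : SF :=
  fun x => 2 * μ * Dsym u i j x + lam * divv u x * (if i = j then 1 else 0)

/-- `div Ψ(u)`, componentwise. -/
def divPsi (μ lam : ℝ) (u : VF) : VF := fun i => fun x => ∑ j, pd j (Psi μ lam u i j) x

/-- The viscous dissipation `Ψ(u):∇u = 2μ|D(u)|² + λ(div u)²`. -/
def PsiColon (μ lam : ℝ) (u : VF) : SF :=
  fun x => ∑ i, ∑ j, Psi μ lam u i j x * pd j (u i) x

/-- Pointwise time derivative of a time-dependent scalar field. -/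
def dt (f : ℝ → SF) : ℝ → SF := fun t x => deriv (fun τ => f τ x) t

/-- Pointwise time derivative of a time-dependent vector field. -/
def dtV (v : ℝ → VF) : ℝ → VF := fun t i x => deriv (fun τ => v τ i x) t

/-- The time interval `[0, T)` for `T ∈ (0, +∞]`. -/
def Dom (T : ℝ≥0∞) : Set ℝ := {t : ℝ | 0 ≤ t ∧ ENNReal.ofReal t < T}

/-- Continuity in time with values in `H^k(𝕋³)` on a time set `D`
(the class `C⁰(D, H^k)`). -/
def ContHs (k : ℕ) (D : Set ℝ) (f : ℝ → SF) : Prop :=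
  ∀ t₀ ∈ D, ∀ ε > (0:ℝ), ∃ δ > (0:ℝ), ∀ t ∈ D, |t - t₀| < δ →
    HsNorm k (fun x => f t x - f t₀ x) < ε

/-- `C⁰(D, H^k)` for vector fields. -/
def ContHsV (k : ℕ) (D : Set ℝ) (v : ℝ → VF) : Prop := ∀ i, ContHs k D fun t => v t i

/-! ### The full compressible MHD system and the electromagnetic fluid system -/

/-- Classical solution of the full compressible MHD system
`∂_tρ + div(ρu) = 0`,
`ρ(∂_tu + u·∇u) + ∇(ρθ) = div Ψ(u) + curl H × H`,
`ρ(∂_tθ + u·∇θ) + ρθ div u = κΔθ + Ψ(u):∇u + |curl H|²`,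
`∂_tH − curl(u×H) = −curl(curl H)`, `div H = 0`
on the torus, on the time set `D` (all physical constants `𝔯 = c_V = σ = μ₀ = 1`). -/
structure IsMHDSol (μ lam κ : ℝ) (D : Set ℝ) (ρ θ : ℝ → SF) (u H : ℝ → VF) : Prop where
  perρ : ∀ t ∈ D, PerS (ρ t)
  perθ : ∀ t ∈ D, PerS (θ t)
  peru : ∀ t ∈ D, PerV (u t)
  perH : ∀ t ∈ D, PerV (H t)
  smρ : ∀ t ∈ D, SmoothS (ρ t)
  smθ : ∀ t ∈ D, SmoothS (θ t)
  smu : ∀ t ∈ D, SmoothV (u t)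
  smH : ∀ t ∈ D, SmoothV (H t)
  tdρ : ∀ (x : Pt), ∀ t ∈ D, DifferentiableAt ℝ (fun τ => ρ τ x) t
  tdθ : ∀ (x : Pt), ∀ t ∈ D, DifferentiableAt ℝ (fun τ => θ τ x) t
  tdu : ∀ (i : Fin 3) (x : Pt), ∀ t ∈ D, DifferentiableAt ℝ (fun τ => u τ i x) t
  tdH : ∀ (i : Fin 3) (x : Pt), ∀ t ∈ D, DifferentiableAt ℝ (fun τ => H τ i x) t
  mass : ∀ t ∈ D, ∀ x, dt ρ t x + divv (fun i y => ρ t y * u t i y) x = 0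
  mom : ∀ t ∈ D, ∀ x, ∀ i,
    ρ t x * (dtV u t i x + convV (u t) (u t) i x) + pd i (fun y => ρ t y * θ t y) x
      = divPsi μ lam (u t) i x + cross (curl (H t)) (H t) i x
  temp : ∀ t ∈ D, ∀ x,
    ρ t x * (dt θ t x + conv (u t) (θ t) x) + ρ t x * θ t x * divv (u t) x
      = κ * lap (θ t) x + PsiColon μ lam (u t) x + normSq (curl (H t)) x
  induction : ∀ t ∈ D, ∀ x, ∀ i,
    dtV H t i x - curl (cross (u t) (H t)) i x = - curl (curl (H t)) i x
  divH : ∀ t ∈ D, ∀ x, divv (H t) x = 0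

/-- Classical solution of the electromagnetic fluid system with dielectric
constant `ε > 0`:
`∂_tρ + div(ρu) = 0`,
`ρ(∂_tu + u·∇u) + ∇(ρθ) = div Ψ(u) + (E + u×H) × H`,
`ρ(∂_tθ + u·∇θ) + ρθ div u = κΔθ + Ψ(u):∇u + |E + u×H|²`,
`ε∂_tE − curl H + E + u×H = 0`,
`∂_tH + curl E = 0`, `div H = 0`
on the torus, on the time set `D`. -/
structure IsEMSol (μ lam κ eps : ℝ) (D : Set ℝ) (ρ θ : ℝ → SF) (u E H : ℝ → VF) : Prop where
  perρ : ∀ t ∈ D, PerS (ρ t)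
  perθ : ∀ t ∈ D, PerS (θ t)
  peru : ∀ t ∈ D, PerV (u t)
  perE : ∀ t ∈ D, PerV (E t)
  perH : ∀ t ∈ D, PerV (H t)
  smρ : ∀ t ∈ D, SmoothS (ρ t)
  smθ : ∀ t ∈ D, SmoothS (θ t)
  smu : ∀ t ∈ D, SmoothV (u t)
  smE : ∀ t ∈ D, SmoothV (E t)
  smH : ∀ t ∈ D, SmoothV (H t)
  tdρ : ∀ (x : Pt), ∀ t ∈ D, DifferentiableAt ℝ (fun τ => ρ τ x) t
  tdθ : ∀ (x : Pt), ∀ t ∈ D, DifferentiableAt ℝ (fun τ => θ τ x) t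
  tdu : ∀ (i : Fin 3) (x : Pt), ∀ t ∈ D, DifferentiableAt ℝ (fun τ => u τ i x) t
  tdE : ∀ (i : Fin 3) (x : Pt), ∀ t ∈ D, DifferentiableAt ℝ (fun τ => E τ i x) t
  tdH : ∀ (i : Fin 3) (x : Pt), ∀ t ∈ D, DifferentiableAt ℝ (fun τ => H τ i x) t
  mass : ∀ t ∈ D, ∀ x, dt ρ t x + divv (fun i y => ρ t y * u t i y) x = 0
  mom : ∀ t ∈ D, ∀ x, ∀ i,
    ρ t x * (dtV u t i x + convV (u t) (u t) i x) + pd i (fun y => ρ t y * θ t y) x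
      = divPsi μ lam (u t) i x
        + cross (fun j y => E t j y + cross (u t) (H t) j y) (H t) i x
  temp : ∀ t ∈ D, ∀ x,
    ρ t x * (dt θ t x + conv (u t) (θ t) x) + ρ t x * θ t x * divv (u t) x
      = κ * lap (θ t) x + PsiColon μ lam (u t) x
        + normSq (fun j y => E t j y + cross (u t) (H t) j y) x
  faraday : ∀ t ∈ D, ∀ x, ∀ i,
    eps * dtV E t i x - curl (H t) i x + E t i x + cross (u t) (H t) i x = 0
  ampere : ∀ t ∈ D, ∀ x, ∀ i, dtV H t i x + curl (E t) i x = 0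
  divH : ∀ t ∈ D, ∀ x, divv (H t) x = 0

/-- The electric field `E⁰ = curl H⁰ − u⁰ × H⁰` induced by the limiting MHD flow. -/
def Efield (u H : VF) : VF := fun i x => curl H i x - cross u H i x

/-- `(N,U,Θ,F,G)` solves the error system obtained by subtracting the full
compressible MHD equations (background solution `(ρ⁰,u⁰,θ⁰,H⁰)`, with induced
electric field `E⁰ = curl H⁰ − u⁰×H⁰`) from the `ε`-dielectric electromagnetic
fluid system: equivalently, `(ρ⁰+N, u⁰+U, θ⁰+Θ, E⁰+F, H⁰+G)` solves the
electromagnetic fluid system. -/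
def IsErrSol (μ lam κ eps : ℝ) (D : Set ℝ) (ρ0 θ0 : ℝ → SF) (u0 H0 : ℝ → VF)
    (N Θ : ℝ → SF) (U F G : ℝ → VF) : Prop :=
  IsEMSol μ lam κ eps D
    (fun t x => ρ0 t x + N t x) (fun t x => θ0 t x + Θ t x)
    (fun t i x => u0 t i x + U t i x)
    (fun t i x => Efield (u0 t) (H0 t) i x + F t i x)
    (fun t i x => H0 t i x + G t i x)

/-- The error-system energy `‖ℰ‖_s = ‖(N,U,Θ,G)‖_s` (sum of the `H^s` norms). -/
def Enorm (s : ℕ) (N Θ : SF) (U G : VF) : ℝ :=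
  HsNorm s N + HsNormV s U + HsNorm s Θ + HsNormV s G

/-- The squared `ε`-weighted energy `⫴ℰ⫴²_s = ‖ℰ‖²_s + ε‖F‖²_s`. -/
def EnormSq (s : ℕ) (eps : ℝ) (N Θ : SF) (U F G : VF) : ℝ :=
  (Enorm s N Θ U G) ^ 2 + eps * (HsNormV s F) ^ 2

end

/-!
One derivative is integrated by parts onto `Θ`, and Young's inequality leaves the square of the
`H^{s-1}` norm of the viscous heating `F`. It then suffices that
`‖F‖_{H^{s-1}} ≤ C (1 + ‖N + ρ⁰‖_{H^s})^{s-1} ‖U‖_{H^s}²`.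

`F` is a sum of products `g⁻¹ p q` with `g = N + ρ⁰` and `p`, `q` first derivatives of `U`. In each
Leibniz term at most one of the three factors carries derivatives beyond the reach of the Sobolev
embeddings `H^s ⊂ C^{s-2}` (for `g`) and `H^{s-1} ⊂ C^{s-3}` (for `p`, `q`); that factor is taken in
`L²` and the other two are bounded uniformly. The embedding itself comes from averaging Taylor's
formula over the cube, along the segments that join a point to all the others.
-/

section TameDerivativeBounds

open scoped Nat

variable {E : Type*} [NormedAddCommGroup E] [NormedSpace ℝ E]

theorem mul_norm_iteratedFDeriv_mul_le {A : Type*} [NormedRing A] [NormedAlgebra ℝ A]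
    {f g : E → A} {x : E} {k : ℕ} {a M : ℝ} (hf : ContDiff ℝ k f) (hg : ContDiff ℝ k g)
    (ha : 0 ≤ a)
    (hM : ∀ i j, i + j = k → a * (‖iteratedFDeriv ℝ i f x‖ * ‖iteratedFDeriv ℝ j g x‖) ≤ M) :
    a * ‖iteratedFDeriv ℝ k (fun y => f y * g y) x‖ ≤ 2 ^ k * M :=
  calc a * ‖iteratedFDeriv ℝ k (fun y => f y * g y) x‖
      ≤ a * ∑ i ∈ Finset.range (k + 1),
          k.choose i * ‖iteratedFDeriv ℝ i f x‖ * ‖iteratedFDeriv ℝ (k - i) g x‖ := by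
        gcongr
        exact norm_iteratedFDeriv_mul_le hf hg x le_rfl
    _ = ∑ i ∈ Finset.range (k + 1),
          k.choose i * (a * (‖iteratedFDeriv ℝ i f x‖ * ‖iteratedFDeriv ℝ (k - i) g x‖)) := by
        rw [Finset.mul_sum]
        exact Finset.sum_congr rfl fun i _ => by ring
    _ ≤ ∑ i ∈ Finset.range (k + 1), k.choose i * M := by
        gcongr with i hi
        exact hM i (k - i) (by grind)
    _ = 2 ^ k * M := by
        rw [← Finset.sum_mul, ← Nat.cast_sum, Nat.sum_range_choose, Nat.cast_pow, Nat.cast_ofNat]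

theorem norm_iteratedFDeriv_mul_mul_le {A : Type*} [NormedRing A] [NormedAlgebra ℝ A]
    {f g h : E → A} {x : E} {k : ℕ} {M : ℝ}
    (hf : ContDiff ℝ k f) (hg : ContDiff ℝ k g) (hh : ContDiff ℝ k h)
    (hM : ∀ i j l, i + j + l = k →
      ‖iteratedFDeriv ℝ i f x‖ * (‖iteratedFDeriv ℝ j g x‖ * ‖iteratedFDeriv ℝ l h x‖) ≤ M) :
    ‖iteratedFDeriv ℝ k (fun y => f y * (g y * h y)) x‖ ≤ 4 ^ k * M := by
  have hM0 : 0 ≤ M := le_trans (by positivity) (hM k 0 0 rfl)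
  have outer : ∀ i m, i + m = k →
      1 * (‖iteratedFDeriv ℝ i f x‖ * ‖iteratedFDeriv ℝ m (fun y => g y * h y) x‖)
        ≤ 2 ^ k * M := by
    intro i m him
    have hmk : (m : WithTop ℕ∞) ≤ k := by exact_mod_cast (by lia : m ≤ k)
    calc 1 * (‖iteratedFDeriv ℝ i f x‖ * ‖iteratedFDeriv ℝ m (fun y => g y * h y) x‖)
        ≤ 2 ^ m * M := by
          rw [one_mul]
          exact mul_norm_iteratedFDeriv_mul_le (hg.of_le hmk) (hh.of_le hmk) (norm_nonneg _)
            fun j l hjl => hM i j l (by lia)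
      _ ≤ 2 ^ k * M := by
          gcongr
          · norm_num
          · lia
  calc ‖iteratedFDeriv ℝ k (fun y => f y * (g y * h y)) x‖
      ≤ 2 ^ k * (2 ^ k * M) := by
        simpa only [one_mul] using
          mul_norm_iteratedFDeriv_mul_le hf (hg.mul hh) zero_le_one outer
    _ = 4 ^ k * M := by
        rw [← mul_assoc, ← mul_pow]
        norm_num

theorem norm_iteratedFDeriv_inv_real {y : ℝ} (hy : 0 < y) (i : ℕ) :
    ‖iteratedFDeriv ℝ i (fun t : ℝ => t⁻¹) y‖ = i ! * y⁻¹ ^ (i + 1) := by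
  have hpow : y ^ (-1 - i : ℤ) = y⁻¹ ^ (i + 1) := by
    rw [inv_pow, ← zpow_natCast, ← zpow_neg]
    congr 1
    push_cast
    ring
  rw [norm_iteratedFDeriv_eq_norm_iteratedDeriv, iteratedDeriv_eq_iterate, iter_deriv_inv, hpow,
    norm_mul, norm_mul, norm_pow, norm_neg, norm_one, one_pow, one_mul, Real.norm_natCast,
    Real.norm_of_nonneg (by positivity)]

/-- The constant of the Faà di Bruno bound for the `k`-th derivative of a reciprocal `1/g` with
`g ≥ c`: one factor `k!` counts the terms, the rest bounds the derivatives of `t ↦ 1/t`. -/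
noncomputable def invConst (c : ℝ) (k : ℕ) : ℝ := k ! * (k ! * (1 + c⁻¹) ^ (k + 1))

theorem invConst_pos {c : ℝ} (hc : 0 < c) (k : ℕ) : 0 < invConst c k := by
  unfold invConst
  positivity

theorem norm_iteratedFDeriv_inv_le {g : E → ℝ} {x : E} {k : ℕ} {c R : ℝ} (hc : 0 < c)
    (hg : ContDiff ℝ k g) (hcg : ∀ y, c ≤ g y)
    (hR : ∀ i, 1 ≤ i → i ≤ k → ‖iteratedFDeriv ℝ i g x‖ ≤ R ^ i) :
    ‖iteratedFDeriv ℝ k (fun y => (g y)⁻¹) x‖ ≤ invConst c k * R ^ k := by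
  have hpos : ∀ y, 0 < g y := fun y => hc.trans_le (hcg y)
  have hinv : ContDiffOn ℝ k (fun t : ℝ => t⁻¹) (Set.Ioi 0) :=
    contDiffOn_inv ℝ |>.mono fun t ht => ne_of_gt ht
  have hrange : Set.range g ⊆ Set.Ioi 0 := Set.range_subset_iff.2 hpos
  refine norm_iteratedFDeriv_comp_le' hrange isOpen_Ioi.uniqueDiffOn hinv hg le_rfl x
    (fun i hi => ?_) hR
  rw [iteratedFDerivWithin_of_isOpen i isOpen_Ioi (hpos x), norm_iteratedFDeriv_inv_real (hpos x)]
  have hci : 0 < c⁻¹ := inv_pos.2 hc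
  have hgx0 : 0 ≤ (g x)⁻¹ := (inv_pos.2 (hpos x)).le
  have hgx : (g x)⁻¹ ≤ 1 + c⁻¹ := (inv_anti₀ hc (hcg x)).trans (by simp)
  calc (i ! : ℝ) * (g x)⁻¹ ^ (i + 1)
      ≤ k ! * (1 + c⁻¹) ^ (i + 1) := by gcongr
    _ ≤ k ! * (1 + c⁻¹) ^ (k + 1) := by
        gcongr
        linarith

-- Faà di Bruno is run with `R = max A G^(1/(n+1))`, where `G` is the norm of the top derivative,
-- so that `G` enters only linearly.
theorem norm_iteratedFDeriv_succ_inv_le {g : E → ℝ} {x : E} {n : ℕ} {c A : ℝ} (hc : 0 < c)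
    (hg : ContDiff ℝ (n + 1 : ℕ) g) (hcg : ∀ y, c ≤ g y) (hA : 1 ≤ A)
    (hlow : ∀ i ≤ n, ‖iteratedFDeriv ℝ i g x‖ ≤ A) :
    ‖iteratedFDeriv ℝ (n + 1) (fun y => (g y)⁻¹) x‖
      ≤ invConst c (n + 1) * (A ^ (n + 1) + ‖iteratedFDeriv ℝ (n + 1) g x‖) := by
  set G := ‖iteratedFDeriv ℝ (n + 1) g x‖
  have hG0 : 0 ≤ G := norm_nonneg _
  set r := G ^ (((n + 1 : ℕ) : ℝ)⁻¹)
  have hrG : r ^ (n + 1) = G := Real.rpow_inv_natCast_pow hG0 n.succ_ne_zero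
  have hbound := norm_iteratedFDeriv_inv_le (R := max A r) hc hg hcg fun i hi1 hin => by
    rcases hin.lt_or_eq with hlt | rfl
    · calc ‖iteratedFDeriv ℝ i g x‖ ≤ A := hlow i (by lia)
        _ ≤ A ^ i := le_self_pow₀ hA (by lia)
        _ ≤ max A r ^ i := by gcongr; exact le_max_left _ _
    · calc G = r ^ (n + 1) := hrG.symm
        _ ≤ max A r ^ (n + 1) := by gcongr; exact le_max_right _ _
  refine hbound.trans (mul_le_mul_of_nonneg_left ?_ (invConst_pos hc _).le)
  rcases max_choice A r with h | h <;> rw [h]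
  · linarith
  · rw [hrG]
    have : 0 ≤ A ^ (n + 1) := by positivity
    linarith

theorem invConst_mono {c : ℝ} (hc : 0 < c) {i k : ℕ} (hik : i ≤ k) :
    invConst c i ≤ invConst c k := by
  have hci : 0 < c⁻¹ := inv_pos.2 hc
  unfold invConst
  gcongr
  linarith

theorem norm_iteratedFDeriv_inv_le_of_le {g : E → ℝ} {x : E} {n i : ℕ} {c A : ℝ} (hc : 0 < c)
    (hg : ContDiff ℝ n g) (hcg : ∀ y, c ≤ g y) (hA : 1 ≤ A)
    (hlow : ∀ j ≤ n, ‖iteratedFDeriv ℝ j g x‖ ≤ A) (hi : i ≤ n) :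
    ‖iteratedFDeriv ℝ i (fun y => (g y)⁻¹) x‖ ≤ invConst c n * A ^ n :=
  calc ‖iteratedFDeriv ℝ i (fun y => (g y)⁻¹) x‖
      ≤ invConst c i * A ^ i :=
        norm_iteratedFDeriv_inv_le hc (hg.of_le (by exact_mod_cast hi)) hcg fun j hj hji =>
          (hlow j (hji.trans hi)).trans (le_self_pow₀ hA (by lia))
    _ ≤ invConst c n * A ^ n :=
        mul_le_mul (invConst_mono hc hi) (pow_le_pow_right₀ hA hi) (by positivity)
          (invConst_pos hc n).le

-- The three orders sum to at most `n + 1`, so at most one of them is out of reach of the bounds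
-- `a`, `b`, `b'` for low orders.
theorem mul_mul_le_of_add_le {u v w : ℕ → ℝ} {n i j l : ℕ} {a H b b' P Q : ℝ} (hn : 2 ≤ n)
    (hijl : i + j + l ≤ n + 1) (hu : ∀ i, 0 ≤ u i) (hv : ∀ j, 0 ≤ v j) (hw : ∀ l, 0 ≤ w l)
    (hua : ∀ i ≤ n, u i ≤ a) (huH : ∀ i ≤ n + 1, u i ≤ H)
    (hvb : ∀ j < n, v j ≤ b) (hvP : ∀ j ≤ n + 1, v j ≤ P)
    (hwb : ∀ l < n, w l ≤ b') (hwQ : ∀ l ≤ n + 1, w l ≤ Q) :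
    u i * (v j * w l) ≤ H * (b * b') + a * (P * b' + b * Q) := by
  have ha : 0 ≤ a := (hu 0).trans (hua 0 (by lia))
  have hH : 0 ≤ H := (hu 0).trans (huH 0 (by lia))
  have hb : 0 ≤ b := (hv 0).trans (hvb 0 (by lia))
  have hb' : 0 ≤ b' := (hw 0).trans (hwb 0 (by lia))
  have hP : 0 ≤ P := (hv 0).trans (hvP 0 (by lia))
  have hQ : 0 ≤ Q := (hw 0).trans (hwQ 0 (by lia))
  have hHbb' : 0 ≤ H * (b * b') := by positivity
  have haPb' : 0 ≤ a * (P * b') := by positivity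
  have habQ : 0 ≤ a * (b * Q) := by positivity
  have hvw : 0 ≤ v j * w l := mul_nonneg (hv j) (hw l)
  rcases lt_or_ge j n with hj | hj
  · rcases lt_or_ge l n with hl | hl
    · have := mul_le_mul (huH i (by lia)) (mul_le_mul (hvb j hj) (hwb l hl) (hw l) hb) hvw hH
      linarith
    · have := mul_le_mul (hua i (by lia)) (mul_le_mul (hvb j hj) (hwQ l (by lia)) (hw l) hb) hvw ha
      linarith
  · have := mul_le_mul (hua i (by lia)) (mul_le_mul (hvP j (by lia)) (hwb l (by lia)) (hw l) hP)
      hvw ha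
    linarith

theorem norm_iteratedFDeriv_inv_mul_mul_le {g p q : E → ℝ} {x : E} {n k : ℕ}
    {c A b b' P Q : ℝ} (hc : 0 < c) (hn : 2 ≤ n) (hk : k ≤ n + 1)
    (hg : ContDiff ℝ (n + 1 : ℕ) g) (hcg : ∀ y, c ≤ g y)
    (hA : 1 ≤ A) (hgA : ∀ i ≤ n, ‖iteratedFDeriv ℝ i g x‖ ≤ A)
    (hp : ContDiff ℝ (n + 1 : ℕ) p) (hpb : ∀ j < n, ‖iteratedFDeriv ℝ j p x‖ ≤ b)
    (hpP : ∀ j ≤ n + 1, ‖iteratedFDeriv ℝ j p x‖ ≤ P)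
    (hq : ContDiff ℝ (n + 1 : ℕ) q) (hqb : ∀ l < n, ‖iteratedFDeriv ℝ l q x‖ ≤ b')
    (hqQ : ∀ l ≤ n + 1, ‖iteratedFDeriv ℝ l q x‖ ≤ Q) :
    ‖iteratedFDeriv ℝ k (fun y => (g y)⁻¹ * (p y * q y)) x‖ ≤ 4 ^ (n + 1) *
      (invConst c (n + 1) * ((A ^ (n + 1) + ‖iteratedFDeriv ℝ (n + 1) g x‖) * (b * b')
        + A ^ (n + 1) * (P * b' + b * Q))) := by
  have hkn : ((k : ℕ) : WithTop ℕ∞) ≤ ((n + 1 : ℕ) : WithTop ℕ∞) := by exact_mod_cast hk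
  have hC := (invConst_pos hc (n + 1)).le
  set C := invConst c (n + 1)
  set a := A ^ (n + 1)
  set G := ‖iteratedFDeriv ℝ (n + 1) g x‖
  have hG : 0 ≤ G := norm_nonneg _
  have hlow : ∀ i ≤ n, ‖iteratedFDeriv ℝ i (fun y => (g y)⁻¹) x‖ ≤ C * a := fun i hi =>
    (norm_iteratedFDeriv_inv_le_of_le hc (hg.of_le (by simp)) hcg hA hgA hi).trans <|
      mul_le_mul (invConst_mono hc n.le_succ) (pow_le_pow_right₀ hA n.le_succ) (by positivity) hC
  have hall : ∀ i ≤ n + 1, ‖iteratedFDeriv ℝ i (fun y => (g y)⁻¹) x‖ ≤ C * (a + G) := by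
    intro i hi
    rcases hi.lt_or_eq with hlt | rfl
    · exact (hlow i (by lia)).trans (by gcongr; linarith)
    · exact norm_iteratedFDeriv_succ_inv_le hc hg hcg hA hgA
  have hginv : ContDiff ℝ k fun y => (g y)⁻¹ :=
    (hg.of_le hkn).inv fun y => (hc.trans_le (hcg y)).ne'
  have hterm : ∀ i j l, i + j + l = k → ‖iteratedFDeriv ℝ i (fun y => (g y)⁻¹) x‖ *
      (‖iteratedFDeriv ℝ j p x‖ * ‖iteratedFDeriv ℝ l q x‖)
        ≤ C * ((a + G) * (b * b') + a * (P * b' + b * Q)) := fun i j l hijl => by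
    have h := mul_mul_le_of_add_le hn (hijl.trans_le hk) (fun _ => norm_nonneg _)
      (fun _ => norm_nonneg _) (fun _ => norm_nonneg _) hlow hall hpb hpP hqb hqQ
    exact h.trans_eq (by ring)
  have hterm0 : 0 ≤ C * ((a + G) * (b * b') + a * (P * b' + b * Q)) :=
    le_trans (by positivity) (hterm k 0 0 rfl)
  refine (norm_iteratedFDeriv_mul_mul_le hginv (hp.of_le hkn) (hq.of_le hkn) hterm).trans ?_
  gcongr
  norm_num

end TameDerivativeBounds

section SobolevEmbedding

open AffineMap

variable {E F : Type*} [NormedAddCommGroup E] [NormedSpace ℝ E]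
  [NormedAddCommGroup F] [NormedSpace ℝ F] {f : E → F} {Q : Set E}

theorem sq_unitInterval_integral_le {φ : ℝ → ℝ} (hφ : Continuous φ) :
    (∫ τ in (0 : ℝ)..1, φ τ) ^ 2 ≤ ∫ τ in (0 : ℝ)..1, φ τ ^ 2 := by
  have : IsProbabilityMeasure (volume.restrict (Set.Ioc (0 : ℝ) 1)) := ⟨by simp⟩
  simp only [intervalIntegral.integral_of_le (zero_le_one' ℝ)]
  exact (even_two.convexOn_pow (𝕜 := ℝ)).map_integral_le (continuous_pow 2).continuousOn
    isClosed_univ (by simp) hφ.integrableOn_Ioc (hφ.pow 2).integrableOn_Ioc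

theorem norm_iteratedFDeriv_two (f : E → F) (x : E) :
    ‖iteratedFDeriv ℝ 2 f x‖ = ‖fderiv ℝ (fderiv ℝ f) x‖ := by
  rw [← norm_iteratedFDeriv_fderiv, norm_iteratedFDeriv_one]

theorem continuous_norm_fderiv_fderiv (hf : ContDiff ℝ 2 f) :
    Continuous fun y => ‖fderiv ℝ (fderiv ℝ f) y‖ := by
  have hf'' : ContDiff ℝ 0 (fderiv ℝ (fderiv ℝ f)) :=
    (hf.fderiv_right (m := 1) le_rfl).fderiv_right le_rfl
  exact hf''.continuous.norm (E := E →L[ℝ] E →L[ℝ] F)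

theorem hasDerivAt_comp_lineMap_sq (hf : Differentiable ℝ f) (x z : E) (τ : ℝ) :
    HasDerivAt (fun τ : ℝ => f (lineMap x z (τ ^ 2)))
      ((2 * τ) • fderiv ℝ f (lineMap x z (τ ^ 2)) (z - x)) τ := by
  have hpath : HasDerivAt (fun τ : ℝ => lineMap x z (τ ^ 2)) ((2 * τ) • (z - x)) τ := by
    simpa [Function.comp_def] using hasDerivAt_lineMap.scomp τ (hasDerivAt_pow 2 τ)
  simpa only [map_smul, Function.comp_def] using (hf _).hasFDerivAt.comp_hasDerivAt τ hpath

-- Running through the segment as `τ ↦ x + τ²(z - x)` makes the remainder kernel vanish to third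
-- order at `x`.
theorem eq_sub_fderiv_add_integral [CompleteSpace F] (hf : ContDiff ℝ 2 f) (x z : E) :
    f x = f z - fderiv ℝ f z (z - x)
      + ∫ τ in (0 : ℝ)..1, (2 * τ ^ 3) •
          fderiv ℝ (fderiv ℝ f) (lineMap x z (τ ^ 2)) (z - x) (z - x) := by
  have hf' : ContDiff ℝ 1 (fderiv ℝ f) := hf.fderiv_right le_rfl
  have hderiv : ∀ τ : ℝ, HasDerivAt
      (fun τ => τ ^ 2 • fderiv ℝ f (lineMap x z (τ ^ 2)) (z - x) - f (lineMap x z (τ ^ 2)))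
      ((2 * τ ^ 3) • fderiv ℝ (fderiv ℝ f) (lineMap x z (τ ^ 2)) (z - x) (z - x)) τ := by
    intro τ
    have hfirst := (hasDerivAt_comp_lineMap_sq (hf'.differentiable one_ne_zero) x z τ)
      |>.clm_apply (hasDerivAt_const τ (z - x))
    have h := ((hasDerivAt_pow 2 τ).smul hfirst).sub
      (hasDerivAt_comp_lineMap_sq (hf.differentiable two_ne_zero) x z τ)
    refine h.congr_deriv ?_
    simp only [_root_.smul_apply, map_zero, add_zero, smul_smul]
    norm_num
    ring_nf
  have hint := intervalIntegral.integral_eq_sub_of_hasDerivAt (a := 0) (b := 1)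
    (fun τ _ => hderiv τ) (Continuous.intervalIntegrable (by fun_prop) _ _)
  rw [hint]
  simp only [one_pow, lineMap_apply_one, one_smul, ne_eq, OfNat.ofNat_ne_zero, not_false_eq_true,
    zero_pow, lineMap_apply_zero, zero_smul]
  abel

theorem norm_taylor_remainder_le (hf : ContDiff ℝ 2 f) {x z : E} {d : ℝ} (hd : ‖z - x‖ ≤ d) :
    ‖∫ τ in (0 : ℝ)..1, (2 * τ ^ 3) •
        fderiv ℝ (fderiv ℝ f) (lineMap x z (τ ^ 2)) (z - x) (z - x)‖
      ≤ 2 * d ^ 2 * ∫ τ in (0 : ℝ)..1, τ ^ 3 * ‖fderiv ℝ (fderiv ℝ f) (lineMap x z (τ ^ 2))‖ := by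
  have hd0 : 0 ≤ d := (norm_nonneg _).trans hd
  set H : ℝ → ℝ := fun τ => ‖fderiv ℝ (fderiv ℝ f) (lineMap x z (τ ^ 2))‖
  have hHc : Continuous H := (continuous_norm_fderiv_fderiv hf).comp (by fun_prop)
  rw [← intervalIntegral.integral_const_mul]
  refine intervalIntegral.norm_integral_le_of_norm_le (g := fun τ => 2 * d ^ 2 * (τ ^ 3 * H τ))
    zero_le_one (ae_of_all _ fun τ hτ => ?_) (Continuous.intervalIntegrable (by fun_prop) _ _)
  have hτ3 : 0 ≤ τ ^ 3 := pow_nonneg hτ.1.le 3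
  rw [norm_smul, Real.norm_of_nonneg (by positivity)]
  calc 2 * τ ^ 3 * ‖fderiv ℝ (fderiv ℝ f) (lineMap x z (τ ^ 2)) (z - x) (z - x)‖
      ≤ 2 * τ ^ 3 * (H τ * ‖z - x‖ * ‖z - x‖) := by
        gcongr
        exact ContinuousLinearMap.le_opNorm₂ _ _ _
    _ ≤ 2 * τ ^ 3 * (H τ * d * d) := by gcongr
    _ = 2 * d ^ 2 * (τ ^ 3 * H τ) := by ring

theorem norm_sq_le_taylor [CompleteSpace F] (hf : ContDiff ℝ 2 f) {x z : E} {d : ℝ}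
    (hd : ‖z - x‖ ≤ d) :
    ‖f x‖ ^ 2 ≤ 3 * ‖f z‖ ^ 2 + 3 * d ^ 2 * ‖fderiv ℝ f z‖ ^ 2
      + 12 * d ^ 4 * ∫ τ in (0 : ℝ)..1,
          τ ^ 6 * ‖fderiv ℝ (fderiv ℝ f) (lineMap x z (τ ^ 2))‖ ^ 2 := by
  set H : ℝ → ℝ := fun τ => ‖fderiv ℝ (fderiv ℝ f) (lineMap x z (τ ^ 2))‖
  have hHc : Continuous H := (continuous_norm_fderiv_fderiv hf).comp (by fun_prop)
  have hlin : ‖fderiv ℝ f z (z - x)‖ ≤ d * ‖fderiv ℝ f z‖ := by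
    rw [mul_comm]
    exact (ContinuousLinearMap.le_opNorm _ _).trans (by gcongr)
  have hjensen : (∫ τ in (0 : ℝ)..1, τ ^ 3 * H τ) ^ 2 ≤ ∫ τ in (0 : ℝ)..1, τ ^ 6 * H τ ^ 2 :=
    (sq_unitInterval_integral_le (by fun_prop)).trans_eq (by simp only [mul_pow, ← pow_mul])
  have hsum : ‖f x‖ ≤ ‖f z‖ + d * ‖fderiv ℝ f z‖ + 2 * d ^ 2 * ∫ τ in (0 : ℝ)..1, τ ^ 3 * H τ := by
    rw [eq_sub_fderiv_add_integral hf x z]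
    exact (norm_add_le _ _).trans (add_le_add ((norm_sub_le _ _).trans (by gcongr))
      (norm_taylor_remainder_le hf hd))
  set a := ‖f z‖
  set b := d * ‖fderiv ℝ f z‖
  set I := ∫ τ in (0 : ℝ)..1, τ ^ 3 * H τ
  calc ‖f x‖ ^ 2
      ≤ (a + b + 2 * d ^ 2 * I) ^ 2 := by gcongr
    _ ≤ 3 * a ^ 2 + 3 * b ^ 2 + 12 * d ^ 4 * I ^ 2 := by
        linarith [sq_nonneg (a - b), sq_nonneg (a - 2 * d ^ 2 * I), sq_nonneg (b - 2 * d ^ 2 * I)]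
    _ ≤ 3 * a ^ 2 + 3 * b ^ 2 + 12 * d ^ 4 * ∫ τ in (0 : ℝ)..1, τ ^ 6 * H τ ^ 2 := by gcongr
    _ = _ := by ring

variable [FiniteDimensional ℝ E] [MeasurableSpace E] [BorelSpace E] (μ : Measure E)
  [μ.IsAddHaarMeasure]

theorem mul_setIntegral_comp_lineMap_le (hQ : IsCompact Q) (hQc : Convex ℝ Q) {T : E → ℝ}
    (hT : Continuous T) (hT0 : ∀ y, 0 ≤ T y) {x : E} (hx : x ∈ Q) {t : ℝ} (ht0 : 0 < t)
    (ht1 : t ≤ 1) :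
    t ^ Module.finrank ℝ E * ∫ z in Q, T (lineMap x z t) ∂μ ≤ ∫ z in Q, T z ∂μ := by
  set h : E → ℝ := Q.indicator T
  have hQm : MeasurableSet Q := hQ.measurableSet
  have hint : Integrable h μ := (hT.continuousOn.integrableOn_compact hQ).integrable_indicator hQm
  have hcomp : Integrable (fun z => h (lineMap x z t)) μ := by
    simpa only [lineMap_apply_module', Function.comp_def] using
      ((hint.comp_add_right x).comp_smul ht0.ne').comp_sub_right x
  have hscale : ∫ z, h (lineMap x z t) ∂μ = (t ^ Module.finrank ℝ E)⁻¹ * ∫ z, h z ∂μ := by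
    simp only [lineMap_apply_module']
    rw [integral_sub_right_eq_self (fun z => h (t • z + x)) x,
      Measure.integral_comp_smul_of_nonneg μ (fun z => h (z + x)) t (hR := ht0.le),
      integral_add_right_eq_self h x, smul_eq_mul]
  have hle : ∫ z in Q, T (lineMap x z t) ∂μ ≤ ∫ z, h (lineMap x z t) ∂μ := by
    rw [← integral_indicator hQm]
    refine integral_mono ?_ hcomp fun z => ?_
    · refine IntegrableOn.integrable_indicator ?_ hQm
      exact (Continuous.comp hT (by fun_prop)).continuousOn.integrableOn_compact hQ
    · by_cases hz : z ∈ Q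
      · have hseg : lineMap x z t ∈ Q := hQc.lineMap_mem hx hz ⟨ht0.le, ht1⟩
        simp only [h, Set.indicator_of_mem hz, Set.indicator_of_mem hseg, le_refl]
      · simpa only [Set.indicator_of_notMem hz] using Set.indicator_nonneg (fun y _ => hT0 y) _
  rw [hscale, integral_indicator hQm, ← div_eq_inv_mul, le_div_iff₀' (by positivity)] at hle
  exact hle

theorem setIntegral_segment_average_le (hdim : Module.finrank ℝ E ≤ 3) (hQ : IsCompact Q)
    (hQc : Convex ℝ Q) {T : E → ℝ} (hT : Continuous T) (hT0 : ∀ y, 0 ≤ T y) {x : E}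
    (hx : x ∈ Q) :
    IntegrableOn (fun z => ∫ τ in (0 : ℝ)..1, τ ^ 6 * T (lineMap x z (τ ^ 2))) Q μ ∧
      ∫ z in Q, (∫ τ in (0 : ℝ)..1, τ ^ 6 * T (lineMap x z (τ ^ 2))) ∂μ ≤ ∫ z in Q, T z ∂μ := by
  have hprod : Integrable (fun p : E × ℝ => p.2 ^ 6 * T (lineMap x p.1 (p.2 ^ 2)))
      ((μ.restrict Q).prod (volume.restrict (Set.Ioc (0 : ℝ) 1))) := by
    rw [Measure.prod_restrict]
    exact ((Continuous.continuousOn (by fun_prop)).integrableOn_compact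
      (hQ.prod isCompact_Icc)).mono_set (Set.prod_mono le_rfl Set.Ioc_subset_Icc_self)
  have hslice : ∀ τ ∈ Set.Ioc (0 : ℝ) 1,
      ∫ z in Q, τ ^ 6 * T (lineMap x z (τ ^ 2)) ∂μ ≤ ∫ z in Q, T z ∂μ := by
    rintro τ ⟨hτ0, hτ1⟩
    rw [integral_const_mul]
    refine le_trans ?_ (mul_setIntegral_comp_lineMap_le μ hQ hQc hT hT0 hx (pow_pos hτ0 2)
      (pow_le_one₀ hτ0.le hτ1))
    refine mul_le_mul_of_nonneg_right ?_ (integral_nonneg fun z => hT0 _)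
    calc τ ^ 6 = (τ ^ 2) ^ 3 := by ring
      _ ≤ (τ ^ 2) ^ Module.finrank ℝ E :=
        pow_le_pow_of_le_one (by positivity) (pow_le_one₀ hτ0.le hτ1) hdim
  simp only [intervalIntegral.integral_of_le (zero_le_one' ℝ)]
  refine ⟨hprod.integral_prod_left, ?_⟩
  calc ∫ z in Q, (∫ τ in Set.Ioc (0 : ℝ) 1, τ ^ 6 * T (lineMap x z (τ ^ 2))) ∂μ
      = ∫ τ in Set.Ioc (0 : ℝ) 1, ∫ z in Q, τ ^ 6 * T (lineMap x z (τ ^ 2)) ∂μ :=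
        integral_integral_swap hprod
    _ ≤ ∫ _ in Set.Ioc (0 : ℝ) 1, ∫ z in Q, T z ∂μ :=
        setIntegral_mono_on hprod.integral_prod_right (integrableOn_const (by simp))
          measurableSet_Ioc hslice
    _ = ∫ z in Q, T z ∂μ := by simp

theorem measureReal_mul_norm_sq_le [CompleteSpace F] (hdim : Module.finrank ℝ E ≤ 3)
    (hQ : IsCompact Q) (hQc : Convex ℝ Q) (hf : ContDiff ℝ 2 f) {x : E} (hx : x ∈ Q) :
    μ.real Q * ‖f x‖ ^ 2 ≤ 3 * ∫ z in Q, ‖f z‖ ^ 2 ∂μ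
      + 3 * Metric.diam Q ^ 2 * ∫ z in Q, ‖fderiv ℝ f z‖ ^ 2 ∂μ
      + 12 * Metric.diam Q ^ 4 * ∫ z in Q, ‖iteratedFDeriv ℝ 2 f z‖ ^ 2 ∂μ := by
  simp only [norm_iteratedFDeriv_two]
  set d := Metric.diam Q
  have hf' : ContDiff ℝ 1 (fderiv ℝ f) := hf.fderiv_right le_rfl
  have hint : ∀ {g : E → ℝ}, Continuous g → IntegrableOn g Q μ := fun hg =>
    hg.continuousOn.integrableOn_compact hQ
  have h0 : IntegrableOn (fun z => 3 * ‖f z‖ ^ 2) Q μ :=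
    hint ((hf.continuous.norm.pow 2).const_mul 3)
  have h1 : IntegrableOn (fun z => 3 * d ^ 2 * ‖fderiv ℝ f z‖ ^ 2) Q μ :=
    hint ((hf'.continuous.norm.pow 2).const_mul _)
  have h01 : IntegrableOn (fun z => 3 * ‖f z‖ ^ 2 + 3 * d ^ 2 * ‖fderiv ℝ f z‖ ^ 2) Q μ :=
    h0.add h1
  have hT : Continuous fun z => ‖fderiv ℝ (fderiv ℝ f) z‖ ^ 2 :=
    (continuous_norm_fderiv_fderiv hf).pow 2
  obtain ⟨h2, hrem⟩ := setIntegral_segment_average_le μ hdim hQ hQc hT (fun _ => sq_nonneg _) hx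
  calc μ.real Q * ‖f x‖ ^ 2
      = ∫ _ in Q, ‖f x‖ ^ 2 ∂μ := by rw [setIntegral_const, smul_eq_mul]
    _ ≤ ∫ z in Q, (3 * ‖f z‖ ^ 2 + 3 * d ^ 2 * ‖fderiv ℝ f z‖ ^ 2 + 12 * d ^ 4 *
          ∫ τ in (0 : ℝ)..1, τ ^ 6 * ‖fderiv ℝ (fderiv ℝ f) (lineMap x z (τ ^ 2))‖ ^ 2) ∂μ := by
        refine setIntegral_mono_on (hint continuous_const) (h01.add (h2.const_mul _))
          hQ.measurableSet fun z hz => norm_sq_le_taylor hf ?_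
        rw [← dist_eq_norm]
        exact Metric.dist_le_diam_of_mem hQ.isBounded hz hx
    _ = 3 * ∫ z in Q, ‖f z‖ ^ 2 ∂μ + 3 * d ^ 2 * ∫ z in Q, ‖fderiv ℝ f z‖ ^ 2 ∂μ
          + 12 * d ^ 4 * ∫ z in Q, (∫ τ in (0 : ℝ)..1,
            τ ^ 6 * ‖fderiv ℝ (fderiv ℝ f) (lineMap x z (τ ^ 2))‖ ^ 2) ∂μ := by
        rw [integral_add h01 (h2.const_mul _), integral_add h0 h1, integral_const_mul,
          integral_const_mul, integral_const_mul]
    _ ≤ _ := by gcongr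

end SobolevEmbedding

section PartialDerivatives

theorem opNorm_le_of_norm_apply_single_le {ι F : Type*} [Fintype ι] [DecidableEq ι]
    [NormedAddCommGroup F] [NormedSpace ℝ F] {k : ℕ}
    (T : ContinuousMultilinearMap ℝ (fun _ : Fin k => ι → ℝ) F) {B : ℝ} (hB0 : 0 ≤ B)
    (hB : ∀ r : Fin k → ι, ‖T fun j => Pi.single (r j) 1‖ ≤ B) :
    ‖T‖ ≤ Fintype.card ι ^ k * B := by
  refine T.opNorm_le_bound (by positivity) fun m => ?_
  have hexpand : T m = ∑ r : Fin k → ι, (∏ j, m j (r j)) • T fun j => Pi.single (r j) 1 := by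
    have hm : m = fun j => ∑ i, m j i • (Pi.single i 1 : ι → ℝ) :=
      funext fun j => pi_eq_sum_univ' (m j)
    conv_lhs => rw [hm]
    rw [T.map_sum]
    exact Finset.sum_congr rfl fun r _ => T.map_smul_univ _ _
  rw [hexpand]
  calc ‖∑ r : Fin k → ι, (∏ j, m j (r j)) • T fun j => Pi.single (r j) 1‖
      ≤ ∑ _r : Fin k → ι, (∏ j, ‖m j‖) * B := by
        refine norm_sum_le_of_le _ fun r _ => ?_
        rw [norm_smul, norm_prod]
        gcongr with j
        · exact norm_le_pi_norm (m j) (r j)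
        · exact hB r
    _ = Fintype.card ι ^ k * B * ∏ j, ‖m j‖ := by
        simp only [Finset.sum_const, Finset.card_univ, Fintype.card_fun, Fintype.card_fin,
          nsmul_eq_mul, Nat.cast_pow]
        ring

variable {f g : SF} {α β : Fin 3 → ℕ} {s : ℕ}

theorem SmoothS.pd (hf : SmoothS f) (i : Fin 3) : SmoothS (pd i f) :=
  (hf.fderiv_right (m := ((⊤ : ℕ∞) : WithTop ℕ∞)) le_rfl).clm_apply contDiff_const

theorem SmoothS.pdIter (hf : SmoothS f) (i : Fin 3) (n : ℕ) : SmoothS (pdIter i n f) := by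
  induction n with
  | zero => exact hf
  | succ n ih => exact SmoothS.pd ih i

theorem SmoothS.mderiv (hf : SmoothS f) (α : Fin 3 → ℕ) : SmoothS (mderiv α f) :=
  SmoothS.pdIter (SmoothS.pdIter (SmoothS.pdIter hf 2 _) 1 _) 0 _

theorem pd_comm (hf : SmoothS f) (i j : Fin 3) : pd i (pd j f) = pd j (pd i f) := by
  funext x
  have hdiff : DifferentiableAt ℝ (fderiv ℝ f) x :=
    (hf.fderiv_right (m := ((⊤ : ℕ∞) : WithTop ℕ∞)) le_rfl).differentiable (by simp) x
  have hsecond : ∀ a b : Fin 3,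
      pd a (pd b f) x = fderiv ℝ (fderiv ℝ f) x (Pi.single a 1) (Pi.single b 1) := by
    intro a b
    unfold pd
    rw [fderiv_clm_apply hdiff (differentiableAt_const _)]
    simp
  have htwo : minSmoothness ℝ 2 ≤ ((⊤ : ℕ∞) : WithTop ℕ∞) := by
    rw [minSmoothness_of_isRCLikeNormedField]
    exact WithTop.coe_le_coe.2 le_top
  rw [hsecond, hsecond, hf.contDiffAt.isSymmSndFDerivAt htwo]

theorem pd_pdIter_comm (hf : SmoothS f) (i j : Fin 3) (n : ℕ) :
    pd i (pdIter j n f) = pdIter j n (pd i f) := by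
  induction n with
  | zero => rfl
  | succ n ih => exact (pd_comm (SmoothS.pdIter hf j n) i j).trans (congrArg (pd j) ih)

theorem pd_mderiv (hf : SmoothS f) (i : Fin 3) (β : Fin 3 → ℕ) :
    pd i (mderiv β f) = mderiv (β + Pi.single i 1) f := by
  have h2 := SmoothS.pdIter hf 2 (β 2)
  have h1 := SmoothS.pdIter h2 1 (β 1)
  unfold mderiv
  fin_cases i
  · simp [pdIter]
  · simp [pdIter, pd_pdIter_comm h1]
  · simp [pdIter, pd_pdIter_comm h1, pd_pdIter_comm h2]

theorem pd_mderiv_comm (hf : SmoothS f) (i : Fin 3) (β : Fin 3 → ℕ) :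
    pd i (mderiv β f) = mderiv β (pd i f) := by
  have h2 := SmoothS.pdIter hf 2 (β 2)
  have h1 := SmoothS.pdIter h2 1 (β 1)
  simp only [mderiv, pd_pdIter_comm h1, pd_pdIter_comm h2, pd_pdIter_comm hf]

theorem mderiv_zero (f : SF) : mderiv 0 f = f := rfl

theorem iteratedFDeriv_apply_single (hf : SmoothS f) {k : ℕ} (r : Fin k → Fin 3) (x : Pt) :
    iteratedFDeriv ℝ k f x (fun j => Pi.single (r j) 1)
      = mderiv (∑ j, Pi.single (r j) 1) f x := by
  induction k generalizing x with
  | zero => simp [mderiv_zero]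
  | succ k ih =>
    have hk : DifferentiableAt ℝ (iteratedFDeriv ℝ k f) x :=
      hf.differentiable_iteratedFDeriv (by exact_mod_cast WithTop.coe_lt_top k) x
    rw [Fin.sum_univ_succ, add_comm (Pi.single _ _), ← pd_mderiv hf, iteratedFDeriv_succ_apply_left]
    have hpd := congrArg (fun h => pd (r 0) h x) (funext (ih (Fin.tail r)))
    simp only [pd] at hpd ⊢
    rw [fderiv_continuousMultilinear_apply_const hk] at hpd
    exact hpd

theorem mderiv_eq_iteratedFDeriv (hf : SmoothS f) (α : Fin 3 → ℕ) (x : Pt) :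
    mderiv α f x = iteratedFDeriv ℝ (∑ i, α i) f x
      fun j => Pi.single (finSigmaFinEquiv.symm j).1 1 := by
  have hα : ∑ j : Fin (∑ i, α i), Pi.single (finSigmaFinEquiv.symm j).1 1 = α := by
    rw [finSigmaFinEquiv.symm.sum_comp (fun p : (i : Fin 3) × Fin (α i) => Pi.single p.1 1),
      Fintype.sum_sigma]
    funext i
    simp [Finset.sum_apply, Pi.single_apply]
  rw [iteratedFDeriv_apply_single hf, hα]

theorem abs_mderiv_le (hf : SmoothS f) (α : Fin 3 → ℕ) (x : Pt) :
    |mderiv α f x| ≤ ‖iteratedFDeriv ℝ (∑ i, α i) f x‖ := by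
  rw [mderiv_eq_iteratedFDeriv hf, ← Real.norm_eq_abs]
  refine (ContinuousMultilinearMap.le_opNorm _ _).trans_eq ?_
  simp only [Pi.norm_single, norm_one, Finset.prod_const_one, mul_one]

theorem mderiv_add (hf : SmoothS f) (hg : SmoothS g) (α : Fin 3 → ℕ) :
    mderiv α (f + g) = mderiv α f + mderiv α g := by
  have hle : ((∑ i, α i : ℕ) : WithTop ℕ∞) ≤ ((⊤ : ℕ∞) : WithTop ℕ∞) := by exact_mod_cast le_top
  funext x
  rw [Pi.add_apply, mderiv_eq_iteratedFDeriv (f := f + g) (hf.add hg), mderiv_eq_iteratedFDeriv hf,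
    mderiv_eq_iteratedFDeriv hg,
    iteratedFDeriv_add_apply (hf.of_le hle).contDiffAt (hg.of_le hle).contDiffAt]
  rfl

theorem mderiv_const_smul (hf : SmoothS f) (c : ℝ) (α : Fin 3 → ℕ) :
    mderiv α (c • f) = c • mderiv α f := by
  have hle : ((∑ i, α i : ℕ) : WithTop ℕ∞) ≤ ((⊤ : ℕ∞) : WithTop ℕ∞) := by exact_mod_cast le_top
  funext x
  rw [Pi.smul_apply, mderiv_eq_iteratedFDeriv (f := c • f) (hf.const_smul c),
    mderiv_eq_iteratedFDeriv hf, iteratedFDeriv_const_smul_apply (hf.of_le hle).contDiffAt]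
  rfl

theorem exists_mderiv_eq_pd (hf : SmoothS f) (hα : 1 ≤ ∑ i, α i) :
    ∃ (i : Fin 3) (β : Fin 3 → ℕ), ∑ j, β j + 1 = ∑ j, α j ∧ mderiv α f = pd i (mderiv β f) := by
  obtain ⟨i, -, hi⟩ := Finset.exists_ne_zero_of_sum_ne_zero (Nat.one_le_iff_ne_zero.1 hα)
  have hle : Pi.single i 1 ≤ α := by
    intro j
    rcases eq_or_ne j i with rfl | hj
    · rw [Pi.single_eq_same]
      exact Nat.one_le_iff_ne_zero.2 hi
    · rw [Pi.single_eq_of_ne hj]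
      exact Nat.zero_le _
  have hsplit : α - Pi.single i 1 + Pi.single i 1 = α := tsub_add_cancel_of_le hle
  refine ⟨i, α - Pi.single i 1, ?_, by rw [pd_mderiv hf, hsplit]⟩
  conv_rhs => rw [← hsplit]
  simp only [Pi.add_apply, Finset.sum_add_distrib, Finset.sum_pi_single', Finset.mem_univ, if_true]

theorem mem_midx : α ∈ midx s ↔ ∑ i, α i ≤ s := by
  refine ⟨fun h => (Finset.mem_filter.1 h).2, fun h => Finset.mem_filter.2 ⟨?_, h⟩⟩
  refine Fintype.mem_piFinset.2 fun i => Finset.mem_range_succ_iff.2 ?_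
  exact (Finset.single_le_sum (fun _ _ => Nat.zero_le _) (Finset.mem_univ i)).trans h

/-- The Taylor jet: the vector of all partial derivatives of order at most `s` at a point, with its
Euclidean norm, so that `HsNorm s f` is the `L²` norm of `jet s f`. -/
noncomputable def jet (s : ℕ) (f : SF) (x : Pt) : EuclideanSpace ℝ (midx s) :=
  WithLp.toLp 2 fun α => mderiv α f x

theorem SmoothS.continuous_jet (hf : SmoothS f) (s : ℕ) : Continuous (jet s f) :=
  (PiLp.continuous_toLp 2 _).comp (continuous_pi fun α => (SmoothS.mderiv hf α).continuous)

theorem norm_jet_sq (s : ℕ) (f : SF) (x : Pt) :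
    ‖jet s f x‖ ^ 2 = ∑ α ∈ midx s, mderiv α f x ^ 2 := by
  rw [EuclideanSpace.real_norm_sq_eq]
  exact Finset.sum_coe_sort (midx s) fun α => mderiv α f x ^ 2

theorem abs_mderiv_le_norm_jet (hα : ∑ i, α i ≤ s) (f : SF) (x : Pt) :
    |mderiv α f x| ≤ ‖jet s f x‖ :=
  PiLp.norm_apply_le (jet s f x) ⟨α, mem_midx.2 hα⟩

theorem norm_jet_le (hf : SmoothS f) {x : Pt} {M : ℝ}
    (hM : ∀ k ≤ s, ‖iteratedFDeriv ℝ k f x‖ ≤ M) : ‖jet s f x‖ ≤ √(midx s).card * M := by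
  have hM0 : 0 ≤ M := (norm_nonneg _).trans (hM 0 (Nat.zero_le s))
  rw [← sq_le_sq₀ (norm_nonneg _) (by positivity), norm_jet_sq, mul_pow,
    Real.sq_sqrt (by positivity), ← nsmul_eq_mul]
  refine Finset.sum_le_card_nsmul _ _ _ fun α hα => ?_
  rw [← sq_abs]
  gcongr
  exact (abs_mderiv_le hf α x).trans (hM _ (mem_midx.1 hα))

theorem norm_iteratedFDeriv_le_norm_jet (hf : SmoothS f) {k : ℕ} (hk : k ≤ s) (x : Pt) :
    ‖iteratedFDeriv ℝ k f x‖ ≤ 3 ^ s * ‖jet s f x‖ := by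
  have hbasis : ∀ r : Fin k → Fin 3,
      ‖iteratedFDeriv ℝ k f x fun j => Pi.single (r j) 1‖ ≤ ‖jet s f x‖ := by
    intro r
    rw [iteratedFDeriv_apply_single hf, Real.norm_eq_abs]
    refine abs_mderiv_le_norm_jet ?_ f x
    simp only [Finset.sum_apply]
    rw [Finset.sum_comm]
    simpa using hk
  have h := opNorm_le_of_norm_apply_single_le _ (norm_nonneg _) hbasis
  rw [Fintype.card_fin, Nat.cast_ofNat] at h
  refine h.trans ?_
  gcongr
  norm_num

theorem jet_add (hf : SmoothS f) (hg : SmoothS g) (s : ℕ) : jet s (f + g) = jet s f + jet s g := by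
  funext x
  ext α
  simp only [jet, mderiv_add hf hg]
  rfl

theorem jet_const_smul (hf : SmoothS f) (c : ℝ) (s : ℕ) : jet s (c • f) = c • jet s f := by
  funext x
  ext α
  simp only [jet, mderiv_const_smul hf]
  rfl

end PartialDerivatives

section LpNorm

variable {X F : Type*} [MeasurableSpace X] [NormedAddCommGroup F] {f : X → F} {μ : Measure X}

theorem lpNorm_two_eq_sqrt (hf : AEStronglyMeasurable f μ) :
    lpNorm f 2 μ = √(∫ x, ‖f x‖ ^ 2 ∂μ) := by
  rw [lpNorm_eq_integral_norm_rpow_toReal two_ne_zero ENNReal.ofNat_ne_top hf, Real.sqrt_eq_rpow]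
  norm_num

theorem lpNorm_mono_ae_real {p : ℝ≥0∞} {g : X → ℝ} (hf : AEStronglyMeasurable f μ)
    (hg : MemLp g p μ) (h : ∀ᵐ x ∂μ, ‖f x‖ ≤ g x) : lpNorm f p μ ≤ lpNorm g p μ := by
  rw [← toReal_eLpNorm hf, ← toReal_eLpNorm hg.aestronglyMeasurable]
  exact ENNReal.toReal_mono hg.eLpNorm_ne_top (eLpNorm_mono_ae_real h)

end LpNorm

section SobolevNorms

theorem isCompact_Q3 : IsCompact Q3 := isCompact_univ_pi fun _ => isCompact_Icc

theorem convex_Q3 : Convex ℝ Q3 := convex_pi fun _ _ => convex_Icc _ _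

theorem Q3_eq_Icc : Q3 = Set.Icc (0 : Pt) fun _ => 2 * π := Set.pi_univ_Icc _ _

theorem volume_real_Q3_pos : 0 < volume.real Q3 := by
  have hle : (0 : Pt) ≤ fun _ => 2 * π := fun _ => two_pi_pos.le
  rw [measureReal_def, Q3_eq_Icc, Real.volume_Icc_pi_toReal hle]
  exact Finset.prod_pos fun _ _ => by simpa using two_pi_pos

theorem integrableOn_Q3 {F : Type*} [NormedAddCommGroup F] {f : Pt → F} (hf : Continuous f) :
    IntegrableOn f Q3 :=
  hf.continuousOn.integrableOn_compact isCompact_Q3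

theorem memLp_two_Q3 {F : Type*} [NormedAddCommGroup F] {f : Pt → F} (hf : Continuous f) :
    MemLp f 2 (volume.restrict Q3) :=
  (memLp_two_iff_integrable_sq_norm hf.aestronglyMeasurable).2 (integrableOn_Q3 (hf.norm.pow 2))

variable {f g : SF} {s : ℕ}

theorem L2_sq (f : SF) : L2 f ^ 2 = ∫ x in Q3, f x ^ 2 := by
  rw [L2, ← Real.sqrt_eq_rpow, Real.sq_sqrt (integral_nonneg fun _ => sq_nonneg _)]

theorem HsNorm_eq_sqrt (s : ℕ) (f : SF) : HsNorm s f = √(∑ α ∈ midx s, L2 (mderiv α f) ^ 2) :=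
  (Real.sqrt_eq_rpow _).symm

theorem HsNorm_eq_lpNorm_jet (hf : SmoothS f) (s : ℕ) :
    HsNorm s f = lpNorm (jet s f) 2 (volume.restrict Q3) := by
  rw [HsNorm_eq_sqrt, lpNorm_two_eq_sqrt (SmoothS.continuous_jet hf s).aestronglyMeasurable]
  simp only [norm_jet_sq, L2_sq]
  congr 1
  exact (integral_finsetSum _ fun α _ =>
    integrableOn_Q3 ((SmoothS.mderiv hf α).continuous.pow 2)).symm

theorem HsNorm_nonneg (s : ℕ) (f : SF) : 0 ≤ HsNorm s f :=
  (HsNorm_eq_sqrt s f).symm ▸ Real.sqrt_nonneg _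

theorem setIntegral_norm_jet_sq (hf : SmoothS f) (s : ℕ) :
    ∫ x in Q3, ‖jet s f x‖ ^ 2 = HsNorm s f ^ 2 := by
  rw [HsNorm_eq_lpNorm_jet hf,
    lpNorm_two_eq_sqrt (SmoothS.continuous_jet hf s).aestronglyMeasurable,
    Real.sq_sqrt (integral_nonneg fun _ => sq_nonneg _)]

theorem HsNorm_add_le (hf : SmoothS f) (hg : SmoothS g) (s : ℕ) :
    HsNorm s (f + g) ≤ HsNorm s f + HsNorm s g := by
  rw [HsNorm_eq_lpNorm_jet (f := f + g) (hf.add hg), HsNorm_eq_lpNorm_jet hf,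
    HsNorm_eq_lpNorm_jet hg, jet_add hf hg]
  exact lpNorm_add_le (memLp_two_Q3 (SmoothS.continuous_jet hf s)) one_le_two

theorem HsNorm_const_smul (hf : SmoothS f) (c : ℝ) (s : ℕ) :
    HsNorm s (c • f) = |c| * HsNorm s f := by
  rw [HsNorm_eq_lpNorm_jet (f := c • f) (hf.const_smul c), HsNorm_eq_lpNorm_jet hf,
    jet_const_smul hf, lpNorm_const_smul, coe_nnnorm, Real.norm_eq_abs]

theorem HsNorm_sum_le {ι : Type*} {w : ι → SF} (hw : ∀ i, SmoothS (w i)) (S : Finset ι) (s : ℕ) :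
    HsNorm s (∑ i ∈ S, w i) ≤ ∑ i ∈ S, HsNorm s (w i) := by
  have hzero : HsNorm s 0 = 0 := by
    simpa using HsNorm_const_smul (f := 0) contDiff_const 0 s
  exact Finset.le_sum_of_subadditive_on_pred (HsNorm s) (fun f => SmoothS f) hzero.le
    (fun f g hf hg => HsNorm_add_le hf hg s) (fun f g hf hg => hf.add hg) w fun i _ => hw i

theorem HsNorm_mono {m : ℕ} (hms : m ≤ s) (f : SF) : HsNorm m f ≤ HsNorm s f := by
  rw [HsNorm_eq_sqrt, HsNorm_eq_sqrt]
  refine Real.sqrt_le_sqrt (Finset.sum_le_sum_of_subset_of_nonneg (fun α hα => ?_)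
    fun _ _ _ => sq_nonneg _)
  exact mem_midx.2 ((mem_midx.1 hα).trans hms)

theorem sq_L2_mderiv_le {α : Fin 3 → ℕ} (hα : ∑ i, α i ≤ s) (f : SF) :
    L2 (mderiv α f) ^ 2 ≤ HsNorm s f ^ 2 := by
  rw [HsNorm_eq_sqrt, Real.sq_sqrt (Finset.sum_nonneg fun _ _ => sq_nonneg _)]
  exact Finset.single_le_sum (f := fun α => L2 (mderiv α f) ^ 2) (fun _ _ => sq_nonneg _)
    (mem_midx.2 hα)

theorem HsNorm_le_HsNormV (s : ℕ) (v : VF) (i : Fin 3) : HsNorm s (v i) ≤ HsNormV s v := by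
  rw [HsNormV, ← Real.sqrt_eq_rpow]
  exact Real.le_sqrt_of_sq_le (Finset.single_le_sum (f := fun i => HsNorm s (v i) ^ 2)
    (fun _ _ => sq_nonneg _) (Finset.mem_univ i))

theorem setIntegral_norm_iteratedFDeriv_sq_le (hf : SmoothS f) {k : ℕ} (hk : k ≤ s) :
    ∫ x in Q3, ‖iteratedFDeriv ℝ k f x‖ ^ 2 ≤ (3 ^ s * HsNorm s f) ^ 2 := by
  have hcont : Continuous (iteratedFDeriv ℝ k f) :=
    hf.continuous_iteratedFDeriv (by exact_mod_cast le_top)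
  rw [mul_pow, ← setIntegral_norm_jet_sq hf, ← integral_const_mul]
  refine setIntegral_mono (integrableOn_Q3 (hcont.norm.pow 2))
    (integrableOn_Q3 (((SmoothS.continuous_jet hf s).norm.pow 2).const_mul _)) fun x => ?_
  simp only [← mul_pow]
  gcongr
  exact norm_iteratedFDeriv_le_norm_jet hf hk x

/-- The constant of the Sobolev embedding `H^s(𝕋³) ⊂ C^{s-2}(𝕋³)`. -/
noncomputable def sobolevConst (s : ℕ) : ℝ :=
  3 ^ s * √((3 + 3 * Metric.diam Q3 ^ 2 + 12 * Metric.diam Q3 ^ 4) / volume.real Q3)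

theorem sobolevConst_nonneg (s : ℕ) : 0 ≤ sobolevConst s := by
  unfold sobolevConst
  positivity

theorem norm_iteratedFDeriv_two_iteratedFDeriv {E F : Type*} [NormedAddCommGroup E]
    [NormedSpace ℝ E] [NormedAddCommGroup F] [NormedSpace ℝ F] (f : E → F) (k : ℕ) (x : E) :
    ‖iteratedFDeriv ℝ 2 (iteratedFDeriv ℝ k f) x‖ = ‖iteratedFDeriv ℝ (k + 2) f x‖ := by
  rw [← norm_iteratedFDeriv_fderiv, fderiv_iteratedFDeriv,
    LinearIsometryEquiv.norm_iteratedFDeriv_comp_left, norm_iteratedFDeriv_one,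
    norm_fderiv_iteratedFDeriv]

theorem norm_iteratedFDeriv_le_HsNorm (hf : SmoothS f) {k : ℕ} (hk : k + 2 ≤ s) {x : Pt}
    (hx : x ∈ Q3) : ‖iteratedFDeriv ℝ k f x‖ ≤ sobolevConst s * HsNorm s f := by
  set d := Metric.diam Q3
  set H := 3 ^ s * HsNorm s f
  have hle : ((2 + k : ℕ) : WithTop ℕ∞) ≤ ((⊤ : ℕ∞) : WithTop ℕ∞) := WithTop.coe_le_coe.2 le_top
  have hf2 : ContDiff ℝ 2 (iteratedFDeriv ℝ k f) :=
    hf.iteratedFDeriv_right (by exact_mod_cast hle)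
  have h := measureReal_mul_norm_sq_le volume (by simp) isCompact_Q3 convex_Q3 hf2 hx
  simp only [norm_iteratedFDeriv_two_iteratedFDeriv, norm_fderiv_iteratedFDeriv] at h
  have hvol := volume_real_Q3_pos
  have hsq : ‖iteratedFDeriv ℝ k f x‖ ^ 2
      ≤ (3 + 3 * d ^ 2 + 12 * d ^ 4) / volume.real Q3 * H ^ 2 := by
    rw [div_mul_eq_mul_div, le_div_iff₀' hvol]
    calc volume.real Q3 * ‖iteratedFDeriv ℝ k f x‖ ^ 2
        ≤ _ := h
      _ ≤ 3 * H ^ 2 + 3 * d ^ 2 * H ^ 2 + 12 * d ^ 4 * H ^ 2 := by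
        gcongr <;> exact setIntegral_norm_iteratedFDeriv_sq_le hf (by lia)
      _ = (3 + 3 * d ^ 2 + 12 * d ^ 4) * H ^ 2 := by ring
  calc ‖iteratedFDeriv ℝ k f x‖
      ≤ √((3 + 3 * d ^ 2 + 12 * d ^ 4) / volume.real Q3 * H ^ 2) := Real.le_sqrt_of_sq_le hsq
    _ = sobolevConst s * HsNorm s f := by
      rw [Real.sqrt_mul (by positivity),
        Real.sqrt_sq (mul_nonneg (by positivity) (HsNorm_nonneg s f)), sobolevConst]
      ring

end SobolevNorms

section IntegrationByParts

variable {f g : SF}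

theorem PerS.pd (hf : PerS f) (i : Fin 3) : PerS (pd i f) := by
  intro x j
  have hshift : f = fun y => f (y + Pi.single j (2 * π)) := funext fun y => (hf y j).symm
  simp only [_root_.pd]
  conv_rhs => rw [hshift, fderiv_comp_add_right]

theorem PerS.pdIter (hf : PerS f) (i : Fin 3) : ∀ n, PerS (pdIter i n f)
  | 0 => hf
  | n + 1 => (PerS.pdIter hf i n).pd i

theorem PerS.mderiv (hf : PerS f) (α : Fin 3 → ℕ) : PerS (mderiv α f) :=
  ((hf.pdIter 2 _).pdIter 1 _).pdIter 0 _

theorem PerS.apply_insertNth_two_pi (hf : PerS f) (j : Fin 3) (y : Fin 2 → ℝ) :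
    f (j.insertNth (2 * π) y) = f (j.insertNth 0 y) := by
  have hface : (j.insertNth 0 y : Pt) + Pi.single j (2 * π) = j.insertNth (2 * π) y := by
    rw [← Fin.insertNth_zero_right, ← Fin.insertNth_add]
    simp
  rw [← hface, hf]

theorem setIntegral_pd_eq_zero (hf : SmoothS f) (hper : PerS f) (i : Fin 3) :
    ∫ x in Q3, pd i f x = 0 := by
  let v : VF := Pi.single i f
  let v' : Fin 3 → Pt → Pt →L[ℝ] ℝ := Pi.single i (fderiv ℝ f)
  have hv : ∀ j x, HasFDerivAt (v j) (v' j x) x := fun j x => by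
    obtain rfl | hj := eq_or_ne j i
    · simpa [v, v'] using (hf.differentiable (by simp) x).hasFDerivAt
    · simpa [v, v', hj] using hasFDerivAt_zero x
  have hdiv : (fun x => ∑ j, v' j x (Pi.single j 1)) = pd i f := by
    funext x
    rw [Finset.sum_eq_single i (fun j _ hj => by simp [v', hj]) (by simp)]
    simp [v', pd]
  have hfaces : ∀ j y, v j (j.insertNth (2 * π) y) = v j (j.insertNth 0 y) := fun j y => by
    obtain rfl | hj := eq_or_ne j i
    · simpa [v] using hper.apply_insertNth_two_pi j y
    · simp [v, hj]
  have key := integral_divergence_of_hasFDerivAt_off_countable' (0 : Pt) (fun _ => 2 * π)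
    (fun _ => two_pi_pos.le) v v' ∅ Set.countable_empty
    (fun j x _ => (hv j x).continuousAt.continuousWithinAt) (fun x _ j => hv j x)
    (by rw [hdiv, ← Q3_eq_Icc]; exact integrableOn_Q3 (SmoothS.pd hf i).continuous)
  rw [hdiv, ← Q3_eq_Icc] at key
  simpa [hfaces] using key

theorem ip_pd_left (hf : SmoothS f) (hg : SmoothS g) (pf : PerS f) (pg : PerS g) (i : Fin 3) :
    ip (pd i f) g = -ip f (pd i g) := by
  have hprod : pd i (f * g) = fun x => f x * pd i g x + pd i f x * g x := by
    funext x
    have hfx := hf.contDiffAt.differentiableAt (x := x) (by simp)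
    have hgx := hg.contDiffAt.differentiableAt (x := x) (by simp)
    simp [pd, fderiv_mul hfx hgx, mul_comm]
  have hzero := setIntegral_pd_eq_zero (f := f * g) (hf.mul hg)
    (fun x j => by simp [pf x j, pg x j]) i
  simp only [hprod] at hzero
  rw [integral_add (f := fun x => f x * pd i g x) (g := fun x => pd i f x * g x)
    (integrableOn_Q3 (hf.continuous.mul (SmoothS.pd hg i).continuous))
    (integrableOn_Q3 ((SmoothS.pd hf i).continuous.mul hg.continuous))] at hzero
  exact eq_neg_of_add_eq_zero_right hzero

theorem L2V_sq (v : VF) : L2V v ^ 2 = ∫ x in Q3, ∑ i, v i x ^ 2 := by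
  rw [L2V, ← Real.sqrt_eq_rpow,
    Real.sq_sqrt (integral_nonneg fun _ => Finset.sum_nonneg fun _ _ => sq_nonneg _)]

theorem sq_L2_le_sq_L2V {v : VF} (hv : ∀ i, Continuous (v i)) (i : Fin 3) :
    L2 (v i) ^ 2 ≤ L2V v ^ 2 := by
  rw [L2_sq, L2V_sq]
  exact setIntegral_mono (integrableOn_Q3 ((hv i).pow 2))
    (integrableOn_Q3 (continuous_finsetSum _ fun j _ => (hv j).pow 2)) fun x =>
      Finset.single_le_sum (f := fun j => v j x ^ 2) (fun _ _ => sq_nonneg _) (Finset.mem_univ i)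

theorem neg_ip_le (hf : Continuous f) (hg : Continuous g) {η : ℝ} (hη : 0 < η) :
    -ip f g ≤ η * L2 g ^ 2 + 1 / (4 * η) * L2 f ^ 2 := by
  have hyoung (x : Pt) : -(f x * g x) ≤ η * g x ^ 2 + 1 / (4 * η) * f x ^ 2 := by
    have hsq : 0 ≤ 1 / (4 * η) * (2 * η * g x + f x) ^ 2 := by positivity
    have hexpand : 1 / (4 * η) * (2 * η * g x + f x) ^ 2
        = η * g x ^ 2 + 1 / (4 * η) * f x ^ 2 + f x * g x := by field_simp; ring
    linarith
  have hf2 : IntegrableOn (fun x => 1 / (4 * η) * f x ^ 2) Q3 :=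
    (integrableOn_Q3 (hf.pow 2)).const_mul _
  have hg2 : IntegrableOn (fun x => η * g x ^ 2) Q3 := (integrableOn_Q3 (hg.pow 2)).const_mul _
  rw [ip, L2_sq, L2_sq, ← integral_neg, ← integral_const_mul, ← integral_const_mul,
    ← integral_add hg2 hf2]
  exact setIntegral_mono (integrableOn_Q3 (hf.mul hg)).neg (hg2.add hf2) hyoung

theorem ip_pd_le (hf : SmoothS f) (hg : SmoothS g) (pf : PerS f) (pg : PerS g) (i : Fin 3)
    {η : ℝ} (hη : 0 < η) :
    ip (pd i f) g ≤ η * L2V (grad g) ^ 2 + 1 / (4 * η) * L2 f ^ 2 :=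
  calc ip (pd i f) g = -ip f (pd i g) := ip_pd_left hf hg pf pg i
    _ ≤ η * L2 (pd i g) ^ 2 + 1 / (4 * η) * L2 f ^ 2 :=
      neg_ip_le hf.continuous (SmoothS.pd hg i).continuous hη
    _ ≤ η * L2V (grad g) ^ 2 + 1 / (4 * η) * L2 f ^ 2 := by
      gcongr ?_ * ?_ + _
      exact sq_L2_le_sq_L2V (v := grad g) (fun j => (SmoothS.pd hg j).continuous) i

end IntegrationByParts

section MoserEstimate

variable {f g p q : SF} {m : ℕ}

theorem HsNorm_pd_le (hf : SmoothS f) (i : Fin 3) (m : ℕ) :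
    HsNorm m (pd i f) ≤ HsNorm (m + 1) f := by
  rw [HsNorm_eq_sqrt, HsNorm_eq_sqrt]
  have hpd : ∀ α, mderiv α (pd i f) = mderiv (α + Pi.single i 1) f := fun α => by
    rw [← pd_mderiv_comm hf, pd_mderiv hf]
  simp only [hpd]
  refine Real.sqrt_le_sqrt ?_
  rw [← Finset.sum_image (f := fun β => L2 (mderiv β f) ^ 2) (add_left_injective _).injOn]
  refine Finset.sum_le_sum_of_subset_of_nonneg (Finset.image_subset_iff.2 fun α hα => ?_)
    fun _ _ _ => sq_nonneg _
  have := mem_midx.1 hα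
  simpa [mem_midx, Finset.sum_add_distrib] using this

theorem HsNorm_le_of_norm_jet_le {ι : Type*} (S : Finset ι) {w : ι → SF} (hf : SmoothS f)
    (hw : ∀ i, SmoothS (w i)) {a₀ : ℝ} {a : ι → ℝ} (ha₀ : 0 ≤ a₀) (ha : ∀ i, 0 ≤ a i)
    (h : ∀ x ∈ Q3, ‖jet m f x‖ ≤ a₀ + ∑ i ∈ S, a i * ‖jet m (w i) x‖) :
    HsNorm m f ≤ a₀ * √(volume.real Q3) + ∑ i ∈ S, a i * HsNorm m (w i) := by
  set ν := volume.restrict Q3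
  let A : SF := fun _ => a₀
  let B : ι → SF := fun i x => a i * ‖jet m (w i) x‖
  have hA : MemLp A 2 ν := memLp_two_Q3 continuous_const
  have hjet : ∀ i, Continuous (jet m (w i)) := fun i => SmoothS.continuous_jet (hw i) m
  have hB : ∀ i, MemLp (B i) 2 ν := fun i => memLp_two_Q3 (continuous_const.mul (hjet i).norm)
  have hAnorm : lpNorm A 2 ν = a₀ * √(volume.real Q3) := by
    rw [lpNorm_const' two_ne_zero ENNReal.ofNat_ne_top, Real.sqrt_eq_rpow]
    simp [ν, abs_of_nonneg ha₀]
  have hBnorm : ∀ i, lpNorm (B i) 2 ν = a i * HsNorm m (w i) := fun i => by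
    rw [HsNorm_eq_lpNorm_jet (hw i), ← lpNorm_norm (hjet i).aestronglyMeasurable]
    refine (lpNorm_const_smul (a i) (fun x => ‖jet m (w i) x‖) _).trans ?_
    simp [ν, abs_of_nonneg (ha i)]
  have hbound : ∀ᵐ x ∂ν, ‖jet m f x‖ ≤ (A + ∑ i ∈ S, B i) x := by
    filter_upwards [ae_restrict_mem isCompact_Q3.measurableSet] with x hx
    simpa [A, B] using h x hx
  calc HsNorm m f
      = lpNorm (jet m f) 2 ν := HsNorm_eq_lpNorm_jet hf m
    _ ≤ lpNorm (A + ∑ i ∈ S, B i) 2 ν :=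
        lpNorm_mono_ae_real (SmoothS.continuous_jet hf m).aestronglyMeasurable
          (hA.add (memLp_finsetSum' S fun i _ => hB i)) hbound
    _ ≤ lpNorm A 2 ν + lpNorm (∑ i ∈ S, B i) 2 ν := lpNorm_add_le hA one_le_two
    _ ≤ lpNorm A 2 ν + ∑ i ∈ S, lpNorm (B i) 2 ν := by
        gcongr
        exact lpNorm_sum_le (fun i _ => hB i) one_le_two
    _ = a₀ * √(volume.real Q3) + ∑ i ∈ S, a i * HsNorm m (w i) := by simp only [hAnorm, hBnorm]

theorem norm_jet_inv_mul_mul_le {n : ℕ} {c A b b' : ℝ} (hc : 0 < c) (hn : 2 ≤ n)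
    (hg : SmoothS g) (hcg : ∀ y, c ≤ g y) (hA : 1 + sobolevConst (n + 2) * HsNorm (n + 2) g ≤ A)
    (hp : SmoothS p) (hb : sobolevConst (n + 1) * HsNorm (n + 1) p ≤ b)
    (hq : SmoothS q) (hb' : sobolevConst (n + 1) * HsNorm (n + 1) q ≤ b') {x : Pt} (hx : x ∈ Q3) :
    ‖jet (n + 1) (fun y => (g y)⁻¹ * (p y * q y)) x‖ ≤
      √(midx (n + 1)).card * (4 ^ (n + 1) * (invConst c (n + 1) *
        ((A ^ (n + 1) + 3 ^ (n + 1) * ‖jet (n + 1) g x‖) * (b * b')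
          + A ^ (n + 1) * (3 ^ (n + 1) * ‖jet (n + 1) p x‖ * b'
            + b * (3 ^ (n + 1) * ‖jet (n + 1) q x‖))))) := by
  have hle : ((n + 1 : ℕ) : WithTop ℕ∞) ≤ ((⊤ : ℕ∞) : WithTop ℕ∞) := WithTop.coe_le_coe.2 le_top
  have hT : SmoothS fun y => (g y)⁻¹ * (p y * q y) :=
    (hg.inv fun y => (hc.trans_le (hcg y)).ne').mul (hp.mul hq)
  have hG := mul_nonneg (sobolevConst_nonneg (n + 2)) (HsNorm_nonneg (n + 2) g)
  have hb0 : 0 ≤ b := (mul_nonneg (sobolevConst_nonneg _) (HsNorm_nonneg _ p)).trans hb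
  have hb0' : 0 ≤ b' := (mul_nonneg (sobolevConst_nonneg _) (HsNorm_nonneg _ q)).trans hb'
  have hC := (invConst_pos hc (n + 1)).le
  have hgA : ∀ i ≤ n, ‖iteratedFDeriv ℝ i g x‖ ≤ A := fun i hi => by
    linarith [norm_iteratedFDeriv_le_HsNorm (s := n + 2) hg (by lia : i + 2 ≤ n + 2) hx]
  have hpb : ∀ j < n, ‖iteratedFDeriv ℝ j p x‖ ≤ b := fun j hj =>
    (norm_iteratedFDeriv_le_HsNorm hp (by lia : j + 2 ≤ n + 1) hx).trans hb
  have hqb : ∀ l < n, ‖iteratedFDeriv ℝ l q x‖ ≤ b' := fun l hl =>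
    (norm_iteratedFDeriv_le_HsNorm hq (by lia : l + 2 ≤ n + 1) hx).trans hb'
  refine norm_jet_le hT fun k hk => (norm_iteratedFDeriv_inv_mul_mul_le hc hn hk (hg.of_le hle) hcg
    (by linarith) hgA (hp.of_le hle) hpb (fun j hj => norm_iteratedFDeriv_le_norm_jet hp hj x)
    (hq.of_le hle) hqb (fun l hl => norm_iteratedFDeriv_le_norm_jet hq hl x)).trans ?_
  gcongr
  exact norm_iteratedFDeriv_le_norm_jet hg le_rfl x

theorem HsNorm_inv_mul_mul_le {n : ℕ} {c A b b' : ℝ} (hc : 0 < c) (hn : 2 ≤ n)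
    (hg : SmoothS g) (hcg : ∀ y, c ≤ g y) (hA : 1 + sobolevConst (n + 2) * HsNorm (n + 2) g ≤ A)
    (hp : SmoothS p) (hb : sobolevConst (n + 1) * HsNorm (n + 1) p ≤ b)
    (hq : SmoothS q) (hb' : sobolevConst (n + 1) * HsNorm (n + 1) q ≤ b') :
    HsNorm (n + 1) (fun y => (g y)⁻¹ * (p y * q y)) ≤
      √(midx (n + 1)).card * (4 ^ (n + 1) * (invConst c (n + 1) *
        ((A ^ (n + 1) * √(volume.real Q3) + 3 ^ (n + 1) * HsNorm (n + 1) g) * (b * b')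
          + A ^ (n + 1) * (3 ^ (n + 1) * HsNorm (n + 1) p * b'
            + b * (3 ^ (n + 1) * HsNorm (n + 1) q))))) := by
  have hT : SmoothS fun y => (g y)⁻¹ * (p y * q y) :=
    (hg.inv fun y => (hc.trans_le (hcg y)).ne').mul (hp.mul hq)
  have hA0 : 0 ≤ A :=
    (add_nonneg zero_le_one (mul_nonneg (sobolevConst_nonneg _) (HsNorm_nonneg _ g))).trans hA
  have hb0 : 0 ≤ b := (mul_nonneg (sobolevConst_nonneg _) (HsNorm_nonneg _ p)).trans hb
  have hb0' : 0 ≤ b' := (mul_nonneg (sobolevConst_nonneg _) (HsNorm_nonneg _ q)).trans hb'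
  have hC := (invConst_pos hc (n + 1)).le
  set D := √(midx (n + 1)).card * (4 ^ (n + 1) * invConst c (n + 1))
  have hD : 0 ≤ D := by positivity
  refine (HsNorm_le_of_norm_jet_le Finset.univ (w := ![g, p, q]) hT
    (by simp [Fin.forall_fin_succ, hg, hp, hq]) (a₀ := D * (A ^ (n + 1) * (b * b')))
    (a := ![D * (3 ^ (n + 1) * (b * b')), D * (A ^ (n + 1) * (3 ^ (n + 1) * b')),
      D * (A ^ (n + 1) * (3 ^ (n + 1) * b))]) (by positivity)
    (fun i => by fin_cases i <;> (dsimp; positivity)) fun x hx =>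
      (norm_jet_inv_mul_mul_le hc hn hg hcg hA hp hb hq hb' hx).trans_eq ?_).trans_eq ?_ <;>
  · simp only [Fin.sum_univ_three, Matrix.cons_val, D]
    ring

theorem exists_HsNorm_inv_mul_mul_le {n : ℕ} {c : ℝ} (hc : 0 < c) (hn : 2 ≤ n) :
    ∃ C ≥ 0, ∀ g p q : SF, SmoothS g → (∀ y, c ≤ g y) → SmoothS p → SmoothS q →
      HsNorm (n + 1) (fun y => (g y)⁻¹ * (p y * q y))
        ≤ C * (1 + HsNorm (n + 2) g) ^ (n + 1) * (HsNorm (n + 1) p * HsNorm (n + 1) q) := by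
  have hC := (invConst_pos hc (n + 1)).le
  have hκ := sobolevConst_nonneg (n + 1)
  have hκg := sobolevConst_nonneg (n + 2)
  set κ := sobolevConst (n + 1)
  set κg := sobolevConst (n + 2)
  refine ⟨√(midx (n + 1)).card * (4 ^ (n + 1) * (invConst c (n + 1) *
    ((κ ^ 2 * √(volume.real Q3) + 2 * 3 ^ (n + 1) * κ) * (1 + κg) ^ (n + 1)
      + 3 ^ (n + 1) * κ ^ 2))), by positivity, fun g p q hg hcg hp hq => ?_⟩
  have hG := HsNorm_nonneg (n + 2) g
  have hP := HsNorm_nonneg (n + 1) p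
  have hQ := HsNorm_nonneg (n + 1) q
  set G := HsNorm (n + 2) g
  set P := HsNorm (n + 1) p
  set Q := HsNorm (n + 1) q
  have hA : 1 + κg * G ≤ (1 + κg) * (1 + G) := by nlinarith
  have hgG : HsNorm (n + 1) g ≤ (1 + G) ^ (n + 1) :=
    calc HsNorm (n + 1) g ≤ 1 + G := (HsNorm_mono n.succ.le_succ g).trans (by linarith)
      _ ≤ (1 + G) ^ (n + 1) := le_self_pow₀ (by linarith) n.succ_ne_zero
  calc HsNorm (n + 1) (fun y => (g y)⁻¹ * (p y * q y))
      ≤ _ := HsNorm_inv_mul_mul_le hc hn hg hcg hA hp (le_refl (κ * P)) hq (le_refl (κ * Q))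
    _ = √(midx (n + 1)).card * (4 ^ (n + 1) * (invConst c (n + 1) *
        ((κ ^ 2 * √(volume.real Q3) + 2 * 3 ^ (n + 1) * κ) * (1 + κg) ^ (n + 1)
          * (1 + G) ^ (n + 1) + 3 ^ (n + 1) * κ ^ 2 * HsNorm (n + 1) g))) * (P * Q) := by
      rw [mul_pow]
      ring
    _ ≤ √(midx (n + 1)).card * (4 ^ (n + 1) * (invConst c (n + 1) *
        ((κ ^ 2 * √(volume.real Q3) + 2 * 3 ^ (n + 1) * κ) * (1 + κg) ^ (n + 1)
          * (1 + G) ^ (n + 1) + 3 ^ (n + 1) * κ ^ 2 * (1 + G) ^ (n + 1)))) * (P * Q) := by gcongr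
    _ = _ := by ring

end MoserEstimate

section ViscousHeating

/-- The viscous-heating source `ρ⁻¹ (2μ|D(U)|² + λ (div U)²)` of a fluid of density `ρ` and
velocity `U`. -/
noncomputable def viscousHeating (μ lam : ℝ) (ρ : SF) (U : VF) : SF :=
  fun y => 1 / ρ y * (2 * μ * DabsSq U y + lam * divv U y ^ 2)

variable {ρ : SF} {U : VF} {n : ℕ} {c : ℝ}

theorem PerS.viscousHeating (hρ : PerS ρ) (hU : PerV U) (μ lam : ℝ) :
    PerS (viscousHeating μ lam ρ U) := fun x k => by
  have hpd : ∀ i j, _root_.pd j (U i) (x + Pi.single k (2 * π)) = _root_.pd j (U i) x :=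
    fun i j => PerS.pd (hU i) j x k
  simp only [_root_.viscousHeating, DabsSq, Dsym, divv, hρ x k, hpd]

theorem SmoothS.viscousHeating (hρ : SmoothS ρ) (hpos : ∀ y, 0 < ρ y) (hU : SmoothV U)
    (μ lam : ℝ) : SmoothS (viscousHeating μ lam ρ U) := by
  have hpd : ∀ i j, SmoothS (_root_.pd j (U i)) := fun i j => SmoothS.pd (hU i) j
  have hDsym : ∀ i j, SmoothS (Dsym U i j) := fun i j => ((hpd i j).add (hpd j i)).div_const 2
  have hDabsSq : SmoothS (DabsSq U) :=
    ContDiff.sum fun i _ => ContDiff.sum fun j _ => (hDsym i j).pow 2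
  have hdivv : SmoothS (divv U) := ContDiff.sum fun i _ => hpd i i
  exact (contDiff_const.div hρ fun y => (hpos y).ne').mul
    ((contDiff_const.mul hDabsSq).add (contDiff_const.mul (hdivv.pow 2)))

theorem viscousHeating_eq_sum (μ lam : ℝ) (ρ : SF) (U : VF) :
    viscousHeating μ lam ρ U = ∑ r : Fin 3 × Fin 3,
      (μ • (fun y => (ρ y)⁻¹ * (pd r.2 (U r.1) y * pd r.2 (U r.1) y))
        + μ • (fun y => (ρ y)⁻¹ * (pd r.2 (U r.1) y * pd r.1 (U r.2) y))
        + lam • (fun y => (ρ y)⁻¹ * (pd r.1 (U r.1) y * pd r.2 (U r.2) y))) := by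
  funext y
  simp only [viscousHeating, DabsSq, Dsym, divv, Finset.sum_apply, Fintype.sum_prod_type,
    Fin.sum_univ_three, Pi.add_apply, Pi.smul_apply, smul_eq_mul]
  ring

theorem HsNorm_smul_add_smul_add_smul_le {f g h : SF} (hf : SmoothS f) (hg : SmoothS g)
    (hh : SmoothS h) (a b d : ℝ) (s : ℕ) :
    HsNorm s (a • f + b • g + d • h)
      ≤ |a| * HsNorm s f + |b| * HsNorm s g + |d| * HsNorm s h := by
  have haf : SmoothS (a • f) := hf.const_smul a
  have hbg : SmoothS (b • g) := hg.const_smul b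
  have hdh : SmoothS (d • h) := hh.const_smul d
  have hab : SmoothS (a • f + b • g) := haf.add hbg
  linarith [HsNorm_add_le hab hdh s, HsNorm_add_le haf hbg s, HsNorm_const_smul hf a s,
    HsNorm_const_smul hg b s, HsNorm_const_smul hh d s]

theorem HsNorm_viscousHeating_le_of_forall (hρ : SmoothS ρ) (hpos : ∀ y, 0 < ρ y)
    (hU : SmoothV U) (μ lam : ℝ) {m : ℕ} {M : ℝ}
    (hM : ∀ i j k l, HsNorm m (fun y => (ρ y)⁻¹ * (pd j (U i) y * pd l (U k) y)) ≤ M) :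
    HsNorm m (viscousHeating μ lam ρ U) ≤ 9 * (2 * |μ| + |lam|) * M := by
  have hpd : ∀ i j, SmoothS (pd j (U i)) := fun i j => SmoothS.pd (hU i) j
  let T (i j k l : Fin 3) : SF := fun y => (ρ y)⁻¹ * (pd j (U i) y * pd l (U k) y)
  have hT : ∀ i j k l, SmoothS (T i j k l) := fun i j k l =>
    (hρ.inv fun y => (hpos y).ne').mul ((hpd i j).mul (hpd k l))
  let W (r : Fin 3 × Fin 3) : SF :=
    μ • T r.1 r.2 r.1 r.2 + μ • T r.1 r.2 r.2 r.1 + lam • T r.1 r.1 r.2 r.2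
  have hW : ∀ r, HsNorm m (W r) ≤ (2 * |μ| + |lam|) * M := fun r =>
    calc HsNorm m (W r)
        ≤ |μ| * HsNorm m (T r.1 r.2 r.1 r.2) + |μ| * HsNorm m (T r.1 r.2 r.2 r.1)
          + |lam| * HsNorm m (T r.1 r.1 r.2 r.2) :=
          HsNorm_smul_add_smul_add_smul_le (hT ..) (hT ..) (hT ..) μ μ lam m
      _ ≤ |μ| * M + |μ| * M + |lam| * M := by gcongr <;> exact hM ..
      _ = (2 * |μ| + |lam|) * M := by ring
  calc HsNorm m (viscousHeating μ lam ρ U)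
      = HsNorm m (∑ r, W r) := by rw [viscousHeating_eq_sum]
    _ ≤ ∑ r, HsNorm m (W r) := HsNorm_sum_le (fun r =>
        (((hT ..).const_smul μ).add ((hT ..).const_smul μ)).add ((hT ..).const_smul lam)) _ _
    _ ≤ Fintype.card (Fin 3 × Fin 3) • ((2 * |μ| + |lam|) * M) :=
        Finset.sum_le_card_nsmul _ _ _ fun r _ => hW r
    _ = 9 * (2 * |μ| + |lam|) * M := by
        simp only [Fintype.card_prod, Fintype.card_fin, nsmul_eq_mul]
        push_cast
        ring

theorem exists_HsNorm_viscousHeating_le (hc : 0 < c) (hn : 2 ≤ n) (μ lam : ℝ) :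
    ∃ C ≥ 0, ∀ (ρ : SF) (U : VF), SmoothS ρ → (∀ y, c ≤ ρ y) → SmoothV U →
      HsNorm (n + 1) (viscousHeating μ lam ρ U)
        ≤ C * (1 + HsNorm (n + 2) ρ) ^ (n + 1) * HsNormV (n + 2) U ^ 2 := by
  obtain ⟨C, hC, hprod⟩ := exists_HsNorm_inv_mul_mul_le hc hn
  refine ⟨9 * (2 * |μ| + |lam|) * C, by positivity, fun ρ U hρ hcρ hU => ?_⟩
  have hρ0 := HsNorm_nonneg (n + 2) ρ
  have hpd : ∀ i j, SmoothS (pd j (U i)) := fun i j => SmoothS.pd (hU i) j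
  have hpdU : ∀ i j, HsNorm (n + 1) (pd j (U i)) ≤ HsNormV (n + 2) U := fun i j =>
    (HsNorm_pd_le (hU i) j (n + 1)).trans (HsNorm_le_HsNormV (n + 2) U i)
  have hprodU : ∀ i j k l, HsNorm (n + 1) (fun y => (ρ y)⁻¹ * (pd j (U i) y * pd l (U k) y))
      ≤ C * (1 + HsNorm (n + 2) ρ) ^ (n + 1) * HsNormV (n + 2) U ^ 2 := fun i j k l => by
    refine (hprod ρ _ _ hρ hcρ (hpd i j) (hpd k l)).trans ?_
    rw [sq (HsNormV _ _)]
    gcongr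
    exacts [HsNorm_nonneg _ _, (HsNorm_nonneg _ _).trans (hpdU i j), hpdU i j, hpdU k l]
  calc HsNorm (n + 1) (viscousHeating μ lam ρ U)
      ≤ 9 * (2 * |μ| + |lam|)
          * (C * (1 + HsNorm (n + 2) ρ) ^ (n + 1) * HsNormV (n + 2) U ^ 2) :=
        HsNorm_viscousHeating_le_of_forall hρ (fun y => hc.trans_le (hcρ y)) hU μ lam hprodU
    _ = _ := by ring

theorem add_pow_mul_pow_le {a E : ℝ} (ha : 1 ≤ a) (hE : 0 ≤ E) (m l : ℕ) :
    (a + E) ^ m * E ^ l ≤ 2 ^ (m - 1) * a ^ m * (E ^ l + E ^ (m + l)) :=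
  calc (a + E) ^ m * E ^ l
      ≤ 2 ^ (m - 1) * (a ^ m + E ^ m) * E ^ l := by
        gcongr
        exact add_pow_le (by linarith) hE m
    _ ≤ 2 ^ (m - 1) * (a ^ m + a ^ m * E ^ m) * E ^ l := by
        gcongr
        exact le_mul_of_one_le_left (by positivity) (one_le_pow₀ ha)
    _ = 2 ^ (m - 1) * a ^ m * (E ^ l + E ^ (m + l)) := by ring

theorem exists_sq_HsNorm_viscousHeating_le (hc : 0 < c) (hn : 2 ≤ n) (μ lam K : ℝ) :
    ∃ C > 0, ∀ (ρ0 N : SF) (U : VF), SmoothS ρ0 → HsNorm (n + 2) ρ0 ≤ K → SmoothS N →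
      (∀ y, c ≤ N y + ρ0 y) → SmoothV U →
      HsNorm (n + 1) (viscousHeating μ lam (N + ρ0) U) ^ 2
        ≤ C * ((HsNorm (n + 2) N + HsNormV (n + 2) U) ^ 4
          + (HsNorm (n + 2) N + HsNormV (n + 2) U) ^ (2 * (n + 2 + 1))) := by
  obtain ⟨C, hC, hheat⟩ := exists_HsNorm_viscousHeating_le hc hn μ lam
  refine ⟨(C ^ 2 + 1) * (2 ^ (2 * (n + 1) - 1) * (1 + |K|) ^ (2 * (n + 1))), by positivity,
    fun ρ0 N U hρ0 hK hN hlow hU => ?_⟩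
  have hN0 := HsNorm_nonneg (n + 2) N
  have hρ := HsNorm_nonneg (n + 2) (N + ρ0)
  have hU0 : 0 ≤ HsNormV (n + 2) U := (HsNorm_nonneg _ _).trans (HsNorm_le_HsNormV _ U 0)
  set E := HsNorm (n + 2) N + HsNormV (n + 2) U
  have hdensity : 1 + HsNorm (n + 2) (N + ρ0) ≤ 1 + |K| + E := by
    linarith [HsNorm_add_le hN hρ0 (n + 2), le_abs_self K]
  calc HsNorm (n + 1) (viscousHeating μ lam (N + ρ0) U) ^ 2
      ≤ (C * (1 + HsNorm (n + 2) (N + ρ0)) ^ (n + 1) * HsNormV (n + 2) U ^ 2) ^ 2 := by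
        gcongr
        exacts [HsNorm_nonneg _ _, hheat (N + ρ0) U (hN.add hρ0) hlow hU]
    _ ≤ (C * (1 + |K| + E) ^ (n + 1) * E ^ 2) ^ 2 := by
        gcongr
        linarith
    _ = C ^ 2 * ((1 + |K| + E) ^ (2 * (n + 1)) * E ^ 4) := by ring
    _ ≤ (C ^ 2 + 1) * (2 ^ (2 * (n + 1) - 1) * (1 + |K|) ^ (2 * (n + 1))
          * (E ^ 4 + E ^ (2 * (n + 1) + 4))) := by
        refine mul_le_mul (by linarith) ?_ (by positivity) (by positivity)
        exact add_pow_mul_pow_le (le_add_of_nonneg_right (abs_nonneg K)) (by positivity) _ _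
    _ = _ := by ring

theorem viscous_heating_estimate_general {s : ℕ} (hs : 4 ≤ s) {α : Fin 3 → ℕ}
    (hα1 : 1 ≤ ∑ i, α i) (hα : ∑ i, α i ≤ s) (μ lam K : ℝ) {c : ℝ} (hc : 0 < c) :
    ∀ η > (0 : ℝ), ∃ C > (0 : ℝ), ∀ ρ0 : SF, SmoothS ρ0 → PerS ρ0 → HsNorm s ρ0 ≤ K →
      ∀ (N Θ : SF) (U : VF), SmoothS N → PerS N → SmoothS Θ → PerS Θ → SmoothV U → PerV U →
        (∀ x, c ≤ N x + ρ0 x) →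
        ip (mderiv α (viscousHeating μ lam (N + ρ0) U)) (mderiv α Θ)
          ≤ η * L2V (grad (mderiv α Θ)) ^ 2
            + C * ((HsNorm s N + HsNormV s U) ^ 4
                + (HsNorm s N + HsNormV s U) ^ (2 * (s + 1))) := by
  intro η hη
  obtain ⟨n, rfl⟩ : ∃ n, s = n + 2 := ⟨s - 2, by lia⟩
  obtain ⟨C, hC, hheat⟩ := exists_sq_HsNorm_viscousHeating_le (n := n) hc (by lia) μ lam K
  refine ⟨1 / (4 * η) * C, by positivity, fun ρ0 hρ0 pρ0 hK N Θ U hN pN hΘ pΘ hU pU hlow => ?_⟩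
  have hF : SmoothS (viscousHeating μ lam (N + ρ0) U) :=
    SmoothS.viscousHeating (ρ := N + ρ0) (hN.add hρ0) (fun y => hc.trans_le (hlow y)) hU μ lam
  have pF : PerS (viscousHeating μ lam (N + ρ0) U) :=
    PerS.viscousHeating (fun x i => by simp [pN x i, pρ0 x i]) pU μ lam
  obtain ⟨i, β, hβ, hαβ⟩ := exists_mderiv_eq_pd hF hα1
  calc ip (mderiv α (viscousHeating μ lam (N + ρ0) U)) (mderiv α Θ)
      = ip (pd i (mderiv β (viscousHeating μ lam (N + ρ0) U))) (mderiv α Θ) := by rw [← hαβ]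
    _ ≤ η * L2V (grad (mderiv α Θ)) ^ 2
          + 1 / (4 * η) * L2 (mderiv β (viscousHeating μ lam (N + ρ0) U)) ^ 2 :=
        ip_pd_le (SmoothS.mderiv hF β) (SmoothS.mderiv hΘ α) (pF.mderiv β) (pΘ.mderiv α) i hη
    _ ≤ _ := by
        rw [mul_assoc]
        gcongr
        exact (sq_L2_mderiv_le (by lia) _).trans (hheat ρ0 N U hρ0 hK hN hlow hU)

end ViscousHeating

/-- estimate of the viscous-heating term.
Let `s > 7/2` be an integer, `1 ≤ |α| ≤ s`, `μ > 0`, `2μ + 3λ > 0`. Suppose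
`ρ⁰ ∈ H^{s+1}(𝕋³)` with `‖ρ⁰‖_{H^{s+1}} ≤ K` and `ρ⁰ ≥ ρ̂ > 0`; let `N ∈ H^s` with
`N + ρ⁰ ≥ ρ̂/2`, `U ∈ H^s(𝕋³;ℝ³)` and `Θ ∈ H^{s+1}` (here: smooth periodic).
Then for every `η > 0` there is `C_η = C(η,s,K,ρ̂,μ,λ)` with
`⟨∂^α{(1/(N+ρ⁰))(2μ|D(U)|²+λ(div U)²)}, ∂^αΘ⟩_{L²}
  ≤ η‖∇∂^αΘ‖²_{L²} + C_η(‖(N,U)‖⁴_{H^s} + ‖(N,U)‖^{2(s+1)}_{H^s})`. -/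
theorem viscous_heating_estimate (s : ℕ) (hs : 7/2 < (s:ℝ)) (α : Fin 3 → ℕ)
    (hα1 : 1 ≤ ∑ i, α i) (hα : (∑ i, α i) ≤ s)
    (μ lam : ℝ) (hμ : 0 < μ) (hlam : 0 < 2 * μ + 3 * lam)
    (K ρhat : ℝ) (hρhat : 0 < ρhat) :
    ∀ η > (0:ℝ), ∃ C > (0:ℝ),
      ∀ ρ0 : SF, SmoothS ρ0 → PerS ρ0 → HsNorm (s+1) ρ0 ≤ K → (∀ x, ρhat ≤ ρ0 x) →
      ∀ (N Θ : SF) (U : VF), SmoothS N → PerS N → SmoothS Θ → PerS Θ →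
        SmoothV U → PerV U → (∀ x, ρhat / 2 ≤ N x + ρ0 x) →
        ip (mderiv α (fun y =>
              1 / (N y + ρ0 y) * (2 * μ * DabsSq U y + lam * (divv U y) ^ 2)))
           (mderiv α Θ)
          ≤ η * (L2V (grad (mderiv α Θ))) ^ 2
            + C * ((HsNorm s N + HsNormV s U) ^ 4
                + (HsNorm s N + HsNormV s U) ^ (2 * (s + 1))) := by
  intro η hη
  have hs4 : 4 ≤ s := by
    have : (3 : ℝ) < s := by linarith
    exact_mod_cast this
  obtain ⟨C, hC, h⟩ := viscous_heating_estimate_general hs4 hα1 hα μ lam K (half_pos hρhat) η hη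
  exact ⟨C, hC, fun ρ0 hρ0 pρ0 hK _ => h ρ0 hρ0 pρ0 ((HsNorm_mono s.le_succ ρ0).trans hK)⟩
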